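/- arXiv:1604.07523 — 3 statements merged into one kernel-verified Lean document; each statement's English description precedes it below -/
import Mathlib

section
/- Let X, Y, Z be topological spaces and let f : X → Y and g : Y → Z be weakly discontinuous maps. Then the composition g ∘ f : X → Z is weakly discontinuous. -/
/-!
Given a nonempty `A`, take a nonempty relatively open `U ⊆ A` on which `f` is continuous, and then
a nonempty relatively open `W ⊆ f '' U` on which `g` is continuous. The preimage of `W` under
`f` restricted to `U` is nonempty, it is open in `U` by continuity and hence open in `A`, and
`g ∘ f` is continuous on it.
-/

open Set Function Topology

/-- A map `f : X → Y` is weakly discontinuous if every nonempty subset `A ⊆ X`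
contains a nonempty subset `U`, open in the subspace topology of `A`, on which
`f` restricts to a continuous map. -/
def WeaklyDiscontinuous {X Y : Type*} [TopologicalSpace X] [TopologicalSpace Y]
    (f : X → Y) : Prop :=
  ∀ A : Set X, A.Nonempty → ∃ U : Set X, U ⊆ A ∧ U.Nonempty ∧
    (∃ V : Set X, IsOpen V ∧ U = A ∩ V) ∧ ContinuousOn f U

/-- Topological spaces `X` and `Y` are weakly homeomorphic if there is a bijection
`f : X → Y` such that both `f` and its inverse are weakly discontinuous. -/
def WeaklyHomeomorphic (X : Type*) (Y : Type*) [TopologicalSpace X] [TopologicalSpace Y] :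
    Prop :=
  ∃ (f : X → Y) (g : Y → X), Function.LeftInverse g f ∧ Function.RightInverse g f ∧
    WeaklyDiscontinuous f ∧ WeaklyDiscontinuous g

theorem composition_weaklyDiscontinuous {X Y Z : Type*}
    [TopologicalSpace X] [TopologicalSpace Y] [TopologicalSpace Z]
    (f : X → Y) (g : Y → Z)
    (hf : WeaklyDiscontinuous f) (hg : WeaklyDiscontinuous g) :
    WeaklyDiscontinuous (g ∘ f) := by
  intro A hA
  obtain ⟨U, hUA, hUne, ⟨V, hV, hUV⟩, hfU⟩ := hf A hA
  obtain ⟨W, hWU, ⟨y, hy⟩, ⟨V', hV', hWV'⟩, hgW⟩ := hg (f '' U) (hUne.image f)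
  -- The preimage of `W` in `U` is `U ∩ f ⁻¹' V'`, the trace on `U` of an open set `T`.
  obtain ⟨T, hT, hTU⟩ := continuousOn_iff'.1 hfU V' hV'
  refine ⟨U ∩ f ⁻¹' V', inter_subset_left.trans hUA, ?_, ⟨V ∩ T, hV.inter hT, ?_⟩, ?_⟩
  · obtain ⟨x, hx, rfl⟩ := hWU hy
    rw [hWV'] at hy
    exact ⟨x, hx, hy.2⟩
  · rw [inter_comm U, hTU, hUV, inter_comm T, inter_assoc]
  · refine hgW.comp (hfU.mono inter_subset_left) ?_
    rintro x ⟨hx, hxV'⟩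
    rw [hWV']
    exact ⟨mem_image_of_mem f hx, hxV'⟩
end

section
/- Every infinite zero-dimensional Polish space X is weakly homeomorphic to one of the following three spaces: the countably infinite discrete space ω, the Cantor space 2^ω (the countable product of the two-point discrete space), or the Baire space ℕ^ω (the countable product of the countably infinite discrete space). -/
/-!
If `X` is countable, any bijection with `ℕ` is a weak homeomorphism. Otherwise `X` is compared with
the Cantor space when it is `σ`-compact and with the Baire space when it is not.

The link with weak discontinuity is `WeaklyDiscontinuous.of_iUnion_isClosed`: by the Baire category
theorem, a map on a Polish space is weakly discontinuous once it is continuous on each piece of a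
countable closed cover. So it is enough to find a bijection that is piecewise a homeomorphism on
`Fσ` pieces, and `weaklyHomeomorphic_of_injections` produces one from a pair of injections
`f : X → Y`, `g : Y → X` by the Cantor–Schröder–Bernstein back-and-forth. There the delicate point
is that the part of `Y` lying in the image of every iterate of `f ∘ g` must be `Fσ`; it is closed
because `f ∘ g` is a closed map.

The injections come from two facts. A zero-dimensional Polish space is a closed subspace of the
Baire space (`exists_isClosedEmbedding_baire`), which is a `Gδ` subspace of the Cantor space
(`exists_isEmbedding_cantor`). In the other direction, an uncountable Polish space contains a Cantor
set, and a zero-dimensional Polish space that is not `σ`-compact contains a closed copy of the Baire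
space (`exists_isClosedEmbedding_of_not_sigmaCompact`): the points without a `σ`-compact clopen
neighbourhood form a closed subspace in which no nonempty clopen set is compact, and such a space is
homeomorphic to the Baire space by the Alexandrov–Urysohn theorem (`exists_homeomorph_baire`).
-/

open Set Function Topology

/-! ### Countable closed covers -/

/-- A map that is continuous on each piece of a countable closed cover of a Polish space is weakly
discontinuous: by the Baire category theorem in `closure A`, one of the pieces contains a nonempty
relatively open subset of `A`. -/
lemma WeaklyDiscontinuous.of_iUnion_isClosed {X Y : Type*} [TopologicalSpace X] [PolishSpace X]
    [TopologicalSpace Y] {f : X → Y} {ι : Type*} [Countable ι] (F : ι → Set X)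
    (hF : ∀ n, IsClosed (F n)) (hcov : ⋃ n, F n = univ)
    (hf : ∀ n, ContinuousOn f (F n)) : WeaklyDiscontinuous f := by
  intro A hA
  have : PolishSpace (closure A) := isClosed_closure.polishSpace
  have : Nonempty (closure A) := hA.closure.to_subtype
  obtain ⟨n, x, hx⟩ := nonempty_interior_of_iUnion_of_closed
    (f := fun n => ((↑) : closure A → X) ⁻¹' F n)
    (fun n => (hF n).preimage continuous_subtype_val)
    (by rw [← preimage_iUnion, hcov, preimage_univ])
  obtain ⟨V, hV, hVi⟩ := isOpen_induced_iff.1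
    (isOpen_interior : IsOpen (interior (((↑) : closure A → X) ⁻¹' F n)))
  have hxV : (x : X) ∈ V := by rwa [← hVi] at hx
  refine ⟨A ∩ V, inter_subset_left, ?_, ⟨V, hV, rfl⟩, (hf n).mono ?_⟩
  · rw [inter_comm]
    exact mem_closure_iff.1 x.2 V hV hxV
  · rintro y ⟨hyA, hyV⟩
    have : (⟨y, subset_closure hyA⟩ : closure A) ∈ ((↑) : closure A → X) ⁻¹' V := hyV
    rw [hVi] at this
    exact mem_preimage.1 (interior_subset this)

/-- A set is `Fσ` if it is the union of a sequence of closed sets. -/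
def IsFSigma {X : Type*} [TopologicalSpace X] (S : Set X) : Prop :=
  ∃ F : ℕ → Set X, (∀ n, IsClosed (F n)) ∧ S = ⋃ n, F n

section FSigma

variable {X Y : Type*} [TopologicalSpace X] [TopologicalSpace Y]

lemma IsClosed.isFSigma {S : Set X} (h : IsClosed S) : IsFSigma S :=
  ⟨fun _ => S, fun _ => h, (iUnion_const S).symm⟩

lemma IsOpen.isFSigma [PolishSpace X] {S : Set X} (h : IsOpen S) : IsFSigma S := by
  let := TopologicalSpace.upgradeIsCompletelyMetrizable X
  obtain ⟨F, hF, -, hU, -⟩ := h.exists_iUnion_isClosed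
  exact ⟨F, hF, hU.symm⟩

lemma IsGδ.isFSigma_compl {S : Set X} (h : IsGδ S) : IsFSigma Sᶜ := by
  obtain ⟨F, hF, rfl⟩ := h.eq_iInter_nat
  exact ⟨fun n => (F n)ᶜ, fun n => (hF n).isClosed_compl, by simp⟩

lemma IsFSigma.iUnion {S : ℕ → Set X} (h : ∀ n, IsFSigma (S n)) : IsFSigma (⋃ n, S n) := by
  choose F hF hS using h
  refine ⟨fun k => F k.unpair.1 k.unpair.2, fun k => hF _ _, ?_⟩
  ext x
  simp only [hS, mem_iUnion]
  constructor
  · rintro ⟨i, j, h⟩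
    exact ⟨Nat.pair i j, by simpa using h⟩
  · rintro ⟨k, h⟩
    exact ⟨_, _, h⟩

lemma IsFSigma.union {S T : Set X} (hS : IsFSigma S) (hT : IsFSigma T) : IsFSigma (S ∪ T) := by
  have : S ∪ T = ⋃ n : ℕ, if n = 0 then S else T := by
    ext x
    simp only [mem_union, mem_iUnion]
    constructor
    · rintro (h | h)
      exacts [⟨0, by simpa using h⟩, ⟨1, by simpa using h⟩]
    · rintro ⟨n, h⟩
      split_ifs at h
      exacts [Or.inl h, Or.inr h]
  rw [this]
  refine IsFSigma.iUnion fun n => ?_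
  split_ifs <;> assumption

/-- The image of an `Fσ` set is `Fσ` as soon as the map is closed on each piece of a countable
closed cover. -/
lemma IsFSigma.image {f : X → Y} (F : ℕ → Set X) (hF : ∀ n, IsClosed (F n))
    (hcov : ⋃ n, F n = univ) (hf : ∀ n A, IsClosed A → A ⊆ F n → IsClosed (f '' A))
    {S : Set X} (hS : IsFSigma S) : IsFSigma (f '' S) := by
  obtain ⟨G, hG, rfl⟩ := hS
  have : f '' ⋃ m, G m = ⋃ m, ⋃ n, f '' (G m ∩ F n) := by
    simp_rw [← image_iUnion, ← inter_iUnion, hcov, inter_univ]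
  rw [this]
  exact IsFSigma.iUnion fun m => IsFSigma.iUnion fun n =>
    (hf n _ ((hG m).inter (hF n)) inter_subset_right).isFSigma

/-- A map that inverts `f` on `F` is continuous on `f '' F` when `f` is closed on `F`. -/
lemma continuousOn_image_of_closedOn {f : X → Y} {F : Set X}
    (hF : IsClosed F) (hf : ∀ A, IsClosed A → A ⊆ F → IsClosed (f '' A)) {φ : Y → X}
    (hφ : ∀ x ∈ F, φ (f x) = x) : ContinuousOn φ (f '' F) := by
  refine continuousOn_iff_isClosed.2 fun t ht =>
    ⟨f '' (t ∩ F), hf _ (ht.inter hF) inter_subset_right, ?_⟩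
  ext y
  constructor
  · rintro ⟨hy, x, hx, rfl⟩
    rw [mem_preimage, hφ x hx] at hy
    exact ⟨mem_image_of_mem _ ⟨hy, hx⟩, mem_image_of_mem _ hx⟩
  · rintro ⟨⟨x, ⟨hxt, hxF⟩, rfl⟩, h⟩
    exact ⟨by rwa [mem_preimage, hφ x hxF], h⟩

end FSigma

/-! ### A Cantor–Schröder–Bernstein theorem -/

/-- A Cantor–Schröder–Bernstein theorem for weak homeomorphisms. The map `g` is a closed embedding,
while `f` is only required to be closed on each piece of a countable closed cover of `X`; that
`f ∘ g` is a closed map makes the residual set `⋂ n, (f ∘ g)^[n] '' Y` closed. -/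
theorem weaklyHomeomorphic_of_injections {X Y : Type*} [TopologicalSpace X] [PolishSpace X]
    [TopologicalSpace Y] [PolishSpace Y] {f : X → Y} {g : Y → X}
    (hfc : Continuous f) (hfi : Injective f) (hg : IsClosedEmbedding g)
    (F : ℕ → Set X) (hF : ∀ n, IsClosed (F n)) (hcov : ⋃ n, F n = univ)
    (hf : ∀ n A, IsClosed A → A ⊆ F n → IsClosed (f '' A))
    (hfr : IsFSigma (range f)ᶜ) (hfg : IsClosedMap (f ∘ g)) :
    WeaklyHomeomorphic X Y := by
  classical
  set h : Y → Y := f ∘ g with hh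
  have hhi : Injective h := hfi.comp hg.injective
  have hiter : ∀ n, IsClosedMap (h^[n]) := by
    intro n
    induction n with
    | zero => exact IsClosedMap.id
    | succ n ih => rw [iterate_succ]; exact ih.comp hfg
  have himg : ∀ n {S : Set Y}, IsFSigma S → IsFSigma (h^[n] '' S) := fun n S hS =>
    IsFSigma.image (fun _ => univ) (fun _ => isClosed_univ) (iUnion_const univ)
      (fun _ A hA _ => hiter n A hA) hS
  -- `D` is where the bijection `φ : Y → X` follows `g`; on `Dᶜ` it follows the inverse of `f`
  set D : Set Y := ⋃ n, h^[n] '' (range f)ᶜ with hD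
  have hDF : IsFSigma D := IsFSigma.iUnion fun n => himg n hfr
  have hDh : ∀ y ∈ D, h y ∈ D := by
    intro y hy
    obtain ⟨n, w, hw, rfl⟩ := mem_iUnion.1 hy
    exact mem_iUnion.2 ⟨n + 1, w, hw, iterate_succ_apply' h n w⟩
  have hDf : ∀ x, f x ∈ D → ∃ y ∈ D, g y = x := by
    intro x hx
    obtain ⟨n, w, hw, hwx⟩ := mem_iUnion.1 hx
    cases n with
    | zero => exact absurd ⟨x, hwx.symm⟩ hw
    | succ n =>
      rw [iterate_succ_apply'] at hwx
      exact ⟨h^[n] w, mem_iUnion.2 ⟨n, w, hw, rfl⟩, hfi hwx⟩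
  have hDr : ∀ y, y ∉ D → y ∈ range f := by
    intro y hy
    by_contra hc
    exact hy (mem_iUnion.2 ⟨0, y, hc, rfl⟩)
  -- `D` and `Dᶜ` are both `Fσ`; the part of `Dᶜ` reached by every iterate of `h` is closed
  have hDc : Dᶜ = (⋂ n, range (h^[n])) ∪ ⋃ n, h^[n] '' (f '' (range g)ᶜ) := by
    apply Subset.antisymm
    · intro y hy
      by_cases hall : ∀ n, y ∈ range (h^[n])
      · exact Or.inl (mem_iInter.2 hall)
      · push Not at hall
        right
        -- the least level that `y` fails to reach is a successor `n + 1`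
        obtain ⟨n, hn, hn'⟩ : ∃ n, y ∈ range (h^[n]) ∧ y ∉ range (h^[n + 1]) := by
          by_contra! hc
          obtain ⟨n, hn⟩ := hall
          apply hn
          clear hn
          induction n with
          | zero => exact ⟨y, rfl⟩
          | succ n ih => exact hc n ih
        obtain ⟨w, rfl⟩ := hn
        have hw : w ∈ range f := by
          by_contra hc
          exact hy (mem_iUnion.2 ⟨n, w, hc, rfl⟩)
        obtain ⟨x, rfl⟩ := hw
        refine mem_iUnion.2 ⟨n, f x, ⟨x, ?_, rfl⟩, rfl⟩
        rintro ⟨z, rfl⟩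
        exact hn' ⟨z, iterate_succ_apply h n z⟩
    · rintro y (hy | hy) hyD
      · obtain ⟨n, w, hw, rfl⟩ := mem_iUnion.1 hyD
        obtain ⟨v, hv⟩ := mem_iInter.1 hy (n + 1)
        rw [iterate_succ_apply] at hv
        exact hw ⟨g v, hhi.iterate n hv⟩
      · obtain ⟨n, _, ⟨x, hx, rfl⟩, rfl⟩ := mem_iUnion.1 hy
        -- pull `h^[n] (f x) ∈ D` back along `h^[n]`, one step at a time
        have key : ∀ n, h^[n] (f x) ∈ D → f x ∈ D := by
          intro n
          induction n with
          | zero => exact id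
          | succ n ih =>
            intro hn
            rw [iterate_succ_apply'] at hn
            obtain ⟨z, hz, hzx⟩ := hDf _ hn
            exact ih (hg.injective hzx ▸ hz)
        obtain ⟨z, -, hz⟩ := hDf x (key n hyD)
        exact hx ⟨z, hz⟩
  have hDcF : IsFSigma Dᶜ := by
    rw [hDc]
    refine (isClosed_iInter fun n => (hiter n).isClosed_range).isFSigma.union
      (IsFSigma.iUnion fun n => himg n ?_)
    exact IsFSigma.image F hF hcov hf hg.isClosed_range.isOpen_compl.isFSigma
  obtain ⟨P, hP, hPD⟩ := hDF
  obtain ⟨Q, hQ, hQD⟩ := hDcF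
  have hPsub : ∀ n, P n ⊆ D := fun n => hPD ▸ subset_iUnion P n
  have hQsub : ∀ n, Q n ⊆ Dᶜ := fun n => hQD ▸ subset_iUnion Q n
  -- left inverses of `g` and of `f`, with junk values outside the respective ranges
  let ginv : X → Y := fun x => if hx : ∃ y, g y = x then hx.choose else f x
  have hginv : ∀ y, ginv (g y) = y := by
    intro y
    have hx : ∃ z, g z = g y := ⟨y, rfl⟩
    simp only [ginv, dif_pos hx]
    exact hg.injective hx.choose_spec
  let finv : Y → X := fun y => if hy : ∃ x, f x = y then hy.choose else g y
  have hfinv : ∀ x, finv (f x) = x := by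
    intro x
    have hy : ∃ z, f z = f x := ⟨x, rfl⟩
    simp only [finv, dif_pos hy]
    exact hfi hy.choose_spec
  let φ : Y → X := fun y => if y ∈ D then g y else finv y
  let ψ : X → Y := fun x => if x ∈ g '' D then ginv x else f x
  have hφD : ∀ y ∈ D, φ y = g y := fun y hy => if_pos hy
  have hφDc : ∀ y, y ∉ D → φ y = finv y := fun y hy => if_neg hy
  have hψD : ∀ x ∈ g '' D, ψ x = ginv x := fun x hx => if_pos hx
  have hψDc : ∀ x, x ∉ g '' D → ψ x = f x := fun x hx => if_neg hx
  have hfD : ∀ x, f x ∈ D ↔ x ∈ g '' D :=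
    fun x => ⟨fun hx => hDf x hx, by rintro ⟨y, hy, rfl⟩; exact hDh y hy⟩
  refine ⟨ψ, φ, ?_, ?_, ?_, ?_⟩
  · intro x
    by_cases hx : x ∈ g '' D
    · obtain ⟨y, hy, rfl⟩ := hx
      rw [hψD _ (mem_image_of_mem g hy), hginv, hφD y hy]
    · rw [hψDc x hx, hφDc _ (fun hc => hx ((hfD x).1 hc)), hfinv]
  · intro y
    by_cases hy : y ∈ D
    · rw [hφD y hy, hψD _ (mem_image_of_mem g hy), hginv]
    · obtain ⟨x, rfl⟩ := hDr y hy
      rw [hφDc _ hy, hfinv, hψDc x (fun hc => hy ((hfD x).2 hc))]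
  · refine WeaklyDiscontinuous.of_iUnion_isClosed
      (Sum.elim (fun n => g '' P n) (fun n => f ⁻¹' Q n)) ?_ ?_ ?_
    · rintro (n | n)
      exacts [hg.isClosedMap _ (hP n), (hQ n).preimage hfc]
    · rw [eq_univ_iff_forall]
      intro x
      rw [mem_iUnion]
      by_cases hx : f x ∈ D
      · obtain ⟨y, hy, rfl⟩ := hDf x hx
        rw [hPD] at hy
        obtain ⟨n, hn⟩ := mem_iUnion.1 hy
        exact ⟨Sum.inl n, mem_image_of_mem g hn⟩
      · rw [← mem_compl_iff, hQD] at hx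
        obtain ⟨n, hn⟩ := mem_iUnion.1 hx
        exact ⟨Sum.inr n, hn⟩
    · rintro (n | n)
      · refine (continuousOn_image_of_closedOn (hP n)
          (fun A hA _ => hg.isClosedMap A hA) (φ := ψ) fun y hy => ?_)
        rw [hψD _ (mem_image_of_mem g (hPsub n hy)), hginv]
      · refine hfc.continuousOn.congr fun x hx => hψDc x fun hc => ?_
        exact hQsub n hx ((hfD x).2 hc)
  · refine WeaklyDiscontinuous.of_iUnion_isClosed
      (Sum.elim P (fun p : ℕ × ℕ => f '' (f ⁻¹' Q p.1 ∩ F p.2))) ?_ ?_ ?_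
    · rintro (n | p)
      exacts [hP n, hf p.2 _ (((hQ p.1).preimage hfc).inter (hF p.2)) inter_subset_right]
    · rw [eq_univ_iff_forall]
      intro y
      rw [mem_iUnion]
      by_cases hy : y ∈ D
      · rw [hPD] at hy
        obtain ⟨n, hn⟩ := mem_iUnion.1 hy
        exact ⟨Sum.inl n, hn⟩
      · obtain ⟨x, rfl⟩ := hDr y hy
        rw [← mem_compl_iff, hQD] at hy
        obtain ⟨n, hn⟩ := mem_iUnion.1 hy
        obtain ⟨m, hm⟩ := mem_iUnion.1 (hcov ▸ mem_univ x)
        exact ⟨Sum.inr (n, m), x, ⟨hn, hm⟩, rfl⟩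
    · rintro (n | p)
      · exact hg.continuous.continuousOn.congr fun y hy => hφD y (hPsub n hy)
      · refine continuousOn_image_of_closedOn (((hQ p.1).preimage hfc).inter (hF p.2))
          (fun A hA hAF => hf p.2 A hA (hAF.trans inter_subset_right)) fun x hx => ?_
        rw [hφDc _ (hQsub p.1 hx.1), hfinv]

/-! ### Zero-dimensional Polish spaces and the Baire space -/

section ClosedEmbedding

variable {X : Type*}

/-- In a zero-dimensional second countable space every neighbourhood assignment is refined by the
fibres of a continuous map to `ℕ`, that is, by a countable clopen partition. -/
lemma exists_continuous_nat_refining [TopologicalSpace X] [SecondCountableTopology X]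
    (hzd : TopologicalSpace.IsTopologicalBasis {s : Set X | IsClopen s})
    (U : X → Set X) (hU : ∀ x, U x ∈ 𝓝 x) :
    ∃ p : X → ℕ, Continuous p ∧ ∀ n ∈ range p, ∃ x, p ⁻¹' {n} ⊆ U x := by
  classical
  rcases isEmpty_or_nonempty X with hX | hX
  · exact ⟨isEmptyElim, continuous_of_const isEmptyElim, by rintro _ ⟨x, -⟩; exact isEmptyElim x⟩
  choose B hB hxB hBU using fun x => hzd.mem_nhds_iff.1 (hU x)
  obtain ⟨s, hs, hcov⟩ := TopologicalSpace.countable_cover_nhds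
    (f := B) fun x => (hB x).isOpen.mem_nhds (hxB x)
  have hsne : s.Nonempty := by
    by_contra hc
    rw [not_nonempty_iff_eq_empty.1 hc] at hcov
    rw [biUnion_empty] at hcov
    exact empty_ne_univ hcov
  obtain ⟨c, rfl⟩ := hs.exists_eq_range hsne
  have hex : ∀ x, ∃ n, x ∈ B (c n) := by
    intro x
    have : x ∈ ⋃ x ∈ range c, B x := hcov ▸ mem_univ x
    simpa using this
  have hfib : ∀ n, (fun x => Nat.find (hex x)) ⁻¹' {n} = B (c n) ∩ ⋂ m ∈ Iio n, (B (c m))ᶜ := by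
    intro n
    ext x
    simp [Nat.find_eq_iff]
  refine ⟨fun x => Nat.find (hex x), ?_, ?_⟩
  · refine continuous_discrete_rng.2 fun n => ?_
    rw [hfib]
    exact (hB _).isOpen.inter
      ((finite_Iio n).isOpen_biInter fun m _ => (hB _).isClosed.isOpen_compl)
  · rintro n -
    exact ⟨c n, by rw [hfib]; exact inter_subset_left.trans (hBU _)⟩

/-- A continuous map from a complete metric space to the Baire space is a closed embedding when
agreement of images on long prefixes forces points to be uniformly close. -/
lemma isClosedEmbedding_of_agreement [MetricSpace X] [CompleteSpace X] {h : X → ℕ → ℕ}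
    (hc : Continuous h)
    (hd : ∀ ε > (0 : ℝ), ∃ n, ∀ x y, (∀ i < n, h x i = h y i) → dist x y < ε) :
    IsClosedEmbedding h := by
  refine .of_continuous_injective_isClosedMap hc ?_ ?_
  · intro x y hxy
    refine dist_le_zero.1 (le_of_forall_gt_imp_ge_of_dense fun ε hε => ?_)
    obtain ⟨n, hn⟩ := hd ε hε
    exact (hn x y fun i _ => by rw [hxy]).le
  · intro A hA
    refine isClosed_of_closure_subset fun y hy => ?_
    have hex : ∀ n, ∃ a ∈ A, ∀ i < n, h a i = y i := by
      intro n
      obtain ⟨_, hz, a, ha, rfl⟩ := mem_closure_iff.1 hy (PiNat.cylinder y n)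
        (PiNat.isOpen_cylinder _ y n) (PiNat.self_mem_cylinder y n)
      exact ⟨a, ha, fun i hi => hz i hi⟩
    choose a haA ha using hex
    have hcau : CauchySeq a := by
      refine Metric.cauchySeq_iff.2 fun ε hε => ?_
      obtain ⟨n, hn⟩ := hd ε hε
      refine ⟨n, fun k hk l hl => hn _ _ fun i hi => ?_⟩
      rw [ha k i (hi.trans_le hk), ha l i (hi.trans_le hl)]
    obtain ⟨b, hb⟩ := cauchySeq_tendsto_of_complete hcau
    refine ⟨b, hA.mem_of_tendsto hb (Filter.Eventually.of_forall haA), ?_⟩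
    funext i
    refine tendsto_nhds_unique (((continuous_apply i).comp hc).continuousAt.tendsto.comp hb) ?_
    refine tendsto_const_nhds.congr' ?_
    filter_upwards [Filter.eventually_gt_atTop i] with n hn
    exact (ha n i hn).symm

/-- Every zero-dimensional Polish space is a closed subspace of the Baire space. -/
theorem exists_isClosedEmbedding_baire [TopologicalSpace X] [PolishSpace X]
    (hzd : TopologicalSpace.IsTopologicalBasis {s : Set X | IsClopen s}) :
    ∃ h : X → ℕ → ℕ, IsClosedEmbedding h := by
  let := TopologicalSpace.upgradeIsCompletelyMetrizable X
  have hpos : ∀ n : ℕ, (0 : ℝ) < 1 / (n + 1) / 2 := fun n => by positivity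
  choose p hpc hp using fun n : ℕ => exists_continuous_nat_refining hzd
    (fun x => Metric.ball x (1 / (n + 1) / 2)) fun x => Metric.ball_mem_nhds x (hpos n)
  refine ⟨fun x n => p n x, isClosedEmbedding_of_agreement (continuous_pi hpc) fun ε hε => ?_⟩
  obtain ⟨n, hn⟩ := exists_nat_one_div_lt hε
  refine ⟨n + 1, fun x y hxy => ?_⟩
  obtain ⟨z, hz⟩ := hp n (p n y) ⟨y, rfl⟩
  have h1 : dist x z < _ := hz (hxy n n.lt_succ_self)
  have h2 : dist y z < _ := hz rfl
  have := dist_triangle_right x y z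
  linarith

end ClosedEmbedding

section NowhereCompact

variable {Z : Type*} [MetricSpace Z] [SecondCountableTopology Z]

/-- A noncompact closed set `C` is split, by a continuous map to `ℕ` taking every value on `C`, into
infinitely many nonempty relatively clopen pieces of small diameter. -/
lemma exists_continuous_nat_splitting
    (hzd : TopologicalSpace.IsTopologicalBasis {s : Set Z | IsClopen s})
    {C : Set Z} (hCc : IsClosed C) (hC : ¬ IsCompact C) {ε : ℝ} (hε : 0 < ε) :
    ∃ q : Z → ℕ, Continuous q ∧ (∀ x ∈ C, ∀ y ∈ C, q x = q y → dist x y < ε) ∧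
      ∀ n, ∃ x ∈ C, q x = n := by
  classical
  obtain ⟨V, hV, hVfin⟩ : ∃ V : Z → Set Z, (∀ x ∈ C, V x ∈ 𝓝 x) ∧
      ∀ t : Finset Z, ¬ C ⊆ ⋃ x ∈ t, V x := by
    by_contra! hc
    refine hC (isCompact_of_finite_subcover fun {ι} W hWo hW => ?_)
    rcases C.eq_empty_or_nonempty with rfl | ⟨x₀, hx₀⟩
    · exact ⟨∅, empty_subset _⟩
    have hx : ∀ x, ∃ i, x ∈ C → x ∈ W i := by
      intro x
      by_cases hxC : x ∈ C
      · obtain ⟨i, hi⟩ := mem_iUnion.1 (hW hxC)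
        exact ⟨i, fun _ => hi⟩
      · obtain ⟨i, -⟩ := mem_iUnion.1 (hW hx₀)
        exact ⟨i, fun h => absurd h hxC⟩
    choose i hi using hx
    obtain ⟨t, ht⟩ := hc (fun x => W (i x)) fun x hxC => (hWo _).mem_nhds (hi x hxC)
    refine ⟨t.image i, ht.trans ?_⟩
    simp
  obtain ⟨p, hpc, hp⟩ := exists_continuous_nat_refining hzd
    (fun x => Metric.ball x (ε / 2) ∩ if x ∈ C then V x else Cᶜ) (by
      intro x
      refine Filter.inter_mem (Metric.ball_mem_nhds x (half_pos hε)) ?_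
      split_ifs with hx
      exacts [hV x hx, hCc.isOpen_compl.mem_nhds hx])
  have hinf : (p '' C).Infinite := by
    intro hfin
    choose c hc using fun x => hp (p x) ⟨x, rfl⟩
    have : Nonempty Z := by
      by_contra hZ
      rw [not_nonempty_iff] at hZ
      exact hC (Subsingleton.isCompact (subsingleton_of_subsingleton))
    choose! s hsC hs using fun n (hn : n ∈ p '' C) => hn
    refine hVfin (hfin.toFinset.image fun n => c (s n)) fun x hx => ?_
    have hn : p x ∈ p '' C := ⟨x, hx, rfl⟩
    have hxU := hc (s (p x)) (hs _ hn).symm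
    have hcC : c (s (p x)) ∈ C := by
      -- a piece that meets `C` is not contained in `Cᶜ`
      by_contra hcC
      have := hxU.2
      rw [if_neg hcC] at this
      exact this hx
    have hxV := hxU.2
    rw [if_pos hcC] at hxV
    exact mem_iUnion₂.2 ⟨c (s (p x)),
      Finset.mem_image_of_mem (fun n => c (s n)) (hfin.mem_toFinset.2 hn), hxV⟩
  -- renumber the pieces that meet `C` consecutively
  refine ⟨fun x => Nat.count (· ∈ p '' C) (p x),
    (continuous_of_discreteTopology (f := Nat.count (· ∈ p '' C))).comp hpc, ?_, ?_⟩
  · intro x hx y hy hxy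
    have hpxy : p x = p y := Nat.count_injective ⟨x, hx, rfl⟩ ⟨y, hy, rfl⟩ hxy
    obtain ⟨z, hz⟩ := hp (p y) ⟨y, rfl⟩
    have h1 : dist x z < _ := (hz hpxy).1
    have h2 : dist y z < _ := (hz (rfl : p y = p y)).1
    have := dist_triangle_right x y z
    linarith
  · intro n
    obtain ⟨x, hx, hxn⟩ := Nat.nth_mem_of_infinite (p := (· ∈ p '' C)) hinf n
    exact ⟨x, hx, (congrArg _ hxn).trans (Nat.count_nth_of_infinite hinf n)⟩

end NowhereCompact

/-! ### Closed copies of the Baire space -/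

/-- The Alexandrov–Urysohn characterization of the Baire space, with the hypothesis needed to build
an infinitely branching clopen scheme: no nonempty clopen set is compact. -/
theorem exists_homeomorph_baire {Z : Type*} [TopologicalSpace Z] [PolishSpace Z] [Nonempty Z]
    (hzd : TopologicalSpace.IsTopologicalBasis {s : Set Z | IsClopen s})
    (hnc : ∀ C : Set Z, IsClopen C → C.Nonempty → ¬ IsCompact C) :
    Nonempty (Z ≃ₜ (ℕ → ℕ)) := by
  classical
  let := TopologicalSpace.upgradeIsCompletelyMetrizable Z
  have hpos : ∀ n : ℕ, (0 : ℝ) < 1 / (n + 1) := fun n => by positivity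
  have hsplit : ∀ (C : Set Z) (n : ℕ), ∃ q : Z → ℕ, IsClopen C → C.Nonempty →
      Continuous q ∧ (∀ x ∈ C, ∀ y ∈ C, q x = q y → dist x y < 1 / (n + 1)) ∧
      ∀ n, ∃ x ∈ C, q x = n := by
    intro C n
    by_cases hC : IsClopen C ∧ C.Nonempty
    · obtain ⟨q, hq⟩ := exists_continuous_nat_splitting hzd hC.1.isClosed
        (hnc C hC.1 hC.2) (hpos n)
      exact ⟨q, fun _ _ => hq⟩
    · exact ⟨fun _ => 0, fun h1 h2 => absurd ⟨h1, h2⟩ hC⟩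
  choose q hq using hsplit
  -- the scheme: `A l` is the piece coded by the list `l` of successive labels, latest label first
  let A : List ℕ → Set Z := fun l =>
    l.rec univ fun m l C => {x ∈ C | q C l.length x = m}
  have hA0 : A [] = univ := rfl
  have hAs : ∀ m l, A (m :: l) = {x ∈ A l | q (A l) l.length x = m} := fun _ _ => rfl
  have hA : ∀ l, IsClopen (A l) ∧ (A l).Nonempty := by
    intro l
    induction l with
    | nil => exact ⟨isClopen_univ, univ_nonempty⟩
    | cons m l ih =>
      obtain ⟨hc, -, hs⟩ := hq (A l) l.length ih.1 ih.2
      exact ⟨ih.1.inter ((isClopen_discrete {m}).preimage hc), hs m⟩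
  -- `L x n` is the code of the piece of level `n` that contains `x`, and `k x` is its branch
  let L : Z → ℕ → List ℕ := fun x n =>
    n.rec [] fun n l => q (A l) n x :: l
  have hLs : ∀ x n, L x (n + 1) = q (A (L x n)) n x :: L x n := fun _ _ => rfl
  let k : Z → ℕ → ℕ := fun x n => q (A (L x n)) n x
  have hres : ∀ x n, PiNat.res (k x) n = L x n := by
    intro x n
    induction n with
    | zero => rfl
    | succ n ih => rw [PiNat.res_succ, ih, hLs]
  have hlen : ∀ x n, (L x n).length = n := fun x n => by rw [← hres, PiNat.res_length]
  have hmem : ∀ n x l, l.length = n → (x ∈ A l ↔ L x n = l) := by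
    intro n
    induction n with
    | zero =>
      intro x l hl
      rw [List.length_eq_zero_iff] at hl
      subst hl
      simp [hA0, L]
    | succ n ih =>
      rintro x (_ | ⟨m, l⟩) hl
      · simp at hl
      · have hl' : l.length = n := by simpa using hl
        rw [hAs, hLs, List.cons.injEq]
        constructor
        · rintro ⟨h1, h2⟩
          have h3 := (ih x l hl').1 h1
          rw [h3, ← hl']
          exact ⟨h2, rfl⟩
        · rintro ⟨h1, h2⟩
          rw [h2, ← hl'] at h1
          exact ⟨(ih x l hl').2 h2, h1⟩
  have hmemL : ∀ x n, x ∈ A (L x n) := fun x n => (hmem n x _ (hlen x n)).2 rfl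
  have hkc : Continuous k := by
    refine continuous_pi fun n => continuous_discrete_rng.2 fun m => ?_
    refine isOpen_iff_mem_nhds.2 fun x hx => ?_
    refine Filter.mem_of_superset ((hA (L x (n + 1))).1.isOpen.mem_nhds (hmemL x (n + 1))) ?_
    intro y hy
    have := (hmem (n + 1) y _ (hlen x (n + 1))).1 hy
    rw [hLs, hLs, List.cons.injEq] at this
    exact this.1.trans hx
  have hke : IsClosedEmbedding k := by
    refine isClosedEmbedding_of_agreement hkc fun ε hε => ?_
    obtain ⟨n, hn⟩ := exists_nat_one_div_lt hε
    refine ⟨n + 1, fun x y hxy => ?_⟩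
    have hL : L x (n + 1) = L y (n + 1) := by
      exact (hres x _).symm.trans
        ((PiNat.res_eq_res.2 fun i hi => hxy i hi).trans (hres y _))
    rw [hLs, hLs, List.cons.injEq] at hL
    have hy := hmemL y n
    rw [← hL.2] at hy
    refine lt_trans ((hq (A (L x n)) n (hA _).1 (hA _).2).2.1 x (hmemL x n) y hy ?_) hn
    rw [hL.1, hL.2]
  have hsurj : Surjective k := by
    intro y
    have hy : y ∈ closure (range k) := by
      refine (PiNat.isTopologicalBasis_cylinders _).mem_closure_iff.2 ?_
      rintro _ ⟨z, n, rfl⟩ hyz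
      obtain ⟨x, hx⟩ := (hA (PiNat.res y n)).2
      refine ⟨k x, ?_, x, rfl⟩
      rw [← PiNat.mem_cylinder_iff_eq.1 hyz]
      have := (hmem n x _ (PiNat.res_length y n)).1 hx
      rw [← hres] at this
      exact fun i hi => PiNat.res_eq_res.1 this hi
    rwa [hke.isClosed_range.closure_eq] at hy
  exact ⟨hke.isEmbedding.toHomeomorphOfSurjective hsurj⟩

/-- Hurewicz's theorem for zero-dimensional spaces: a Polish space that is not `σ`-compact contains
a closed copy of the Baire space, namely the set of points without a `σ`-compact clopen neighbourhood. -/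
theorem exists_isClosedEmbedding_of_not_sigmaCompact {X : Type*} [TopologicalSpace X]
    [PolishSpace X] (hzd : TopologicalSpace.IsTopologicalBasis {s : Set X | IsClopen s})
    (hX : ¬ SigmaCompactSpace X) : ∃ g : (ℕ → ℕ) → X, IsClosedEmbedding g := by
  let N : Set X := {x | ∀ U, IsClopen U → x ∈ U → ¬ IsSigmaCompact U}
  have hN : IsClosed N := by
    refine isClosed_of_closure_subset fun x hx U hU hxU => ?_
    obtain ⟨y, hyU, hyN⟩ := mem_closure_iff.1 hx U hU.isOpen hxU
    exact hyN U hU hyU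
  -- by the Lindelöf property, `Nᶜ` is covered by countably many `σ`-compact clopen sets
  have hcov : ∃ K : Set X, IsSigmaCompact K ∧ Nᶜ ⊆ K := by
    have : ∀ x : (Nᶜ : Set X), ∃ U, IsClopen U ∧ (x : X) ∈ U ∧ IsSigmaCompact U := by
      rintro ⟨x, hx⟩
      simpa [N] using hx
    choose U hU hxU hUs using this
    obtain ⟨T, hT, hTU⟩ := TopologicalSpace.isOpen_iUnion_countable U fun x => (hU x).isOpen
    refine ⟨⋃ x ∈ T, U x, isSigmaCompact_biUnion hT fun x _ => hUs x, ?_⟩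
    rw [hTU]
    exact fun x hx => mem_iUnion.2 ⟨⟨x, hx⟩, hxU ⟨x, hx⟩⟩
  obtain ⟨K, hK, hNK⟩ := hcov
  -- a `σ`-compact trace `U ∩ N` would make `U` itself `σ`-compact, since `U \ N ⊆ K`
  have hkey : ∀ U, IsClopen U → (U ∩ N).Nonempty → ¬ IsSigmaCompact (U ∩ N) := by
    rintro U hU ⟨x, hxU, hxN⟩ hc
    refine hxN U hU hxU ?_
    have hu : IsSigmaCompact ((U ∩ N) ∪ K) := by
      rw [union_eq_iUnion]
      exact isSigmaCompact_iUnion _ (Bool.forall_bool.2 ⟨hK, hc⟩)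
    refine hu.of_isClosed_subset hU.isClosed fun y hy => ?_
    by_cases hyN : y ∈ N
    exacts [Or.inl ⟨hy, hyN⟩, Or.inr (hNK hyN)]
  have hne : N.Nonempty := by
    by_contra hc
    rw [not_nonempty_iff_eq_empty] at hc
    rw [hc, compl_empty] at hNK
    exact hX (isSigmaCompact_univ_iff.1 (univ_subset_iff.1 hNK ▸ hK))
  have : PolishSpace N := hN.polishSpace
  have : Nonempty N := hne.to_subtype
  have hzdN : TopologicalSpace.IsTopologicalBasis {s : Set N | IsClopen s} := by
    refine TopologicalSpace.isTopologicalBasis_of_isOpen_of_nhds (fun s hs => hs.isOpen) ?_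
    intro x V hxV hV
    obtain ⟨W, hW, rfl⟩ := isOpen_induced_iff.1 hV
    obtain ⟨U, hU, hxU, hUW⟩ := hzd.exists_subset_of_mem_open hxV hW
    exact ⟨_, IsClopen.preimage hU continuous_subtype_val, hxU, preimage_mono hUW⟩
  obtain ⟨e⟩ := exists_homeomorph_baire hzdN (by
    rintro C hC ⟨x, hxC⟩ hcomp
    obtain ⟨W, hW, rfl⟩ := isOpen_induced_iff.1 hC.isOpen
    obtain ⟨U, hU, hxU, hUW⟩ := hzd.exists_subset_of_mem_open hxC hW
    refine hkey U hU ⟨x, hxU, x.2⟩ (IsCompact.isSigmaCompact ?_)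
    refine (hcomp.image continuous_subtype_val).of_isClosed_subset
      (IsClopen.isClosed hU |>.inter hN) ?_
    rintro y ⟨hyU, hyN⟩
    exact ⟨⟨y, hyN⟩, hUW hyU, rfl⟩)
  exact ⟨_, hN.isClosedEmbedding_subtypeVal.comp e.symm.isClosedEmbedding⟩

/-! ### The three cases -/

/-- The Baire space embeds in the Cantor space as a `Gδ` set: identify `2^ω` with `2^(ω × ω)` and
send a function to the indicator of its graph. -/
lemma exists_isEmbedding_cantor :
    ∃ e : (ℕ → ℕ) → ℕ → Bool, IsEmbedding e ∧ IsGδ (range e) := by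
  have hd : IsEmbedding (fun n k : ℕ => decide (n = k)) := by
    refine ⟨isInducing_iff_nhds.2 fun n => ?_, fun m n h => by simpa using congrFun h n⟩
    have hc : Continuous (fun n k : ℕ => decide (n = k)) := continuous_of_discreteTopology
    refine le_antisymm hc.continuousAt.tendsto.le_comap ?_
    rw [nhds_discrete ℕ, Filter.le_pure_iff]
    refine ⟨{z | z n = true}, ?_, fun m hm => by simpa using hm⟩
    have ho : IsOpen {z : ℕ → Bool | z n = true} :=
      (isOpen_discrete {true}).preimage (continuous_apply (A := fun _ : ℕ => Bool) n)
    exact ho.mem_nhds (decide_eq_true rfl)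
  have hG : IsGδ (range (Pi.map fun (_ : ℕ) (n k : ℕ) => decide (n = k))) := by
    have : range (Pi.map fun (_ : ℕ) (n k : ℕ) => decide (n = k)) =
        ⋂ i : ℕ, ((⋃ k : ℕ, {z : ℕ → ℕ → Bool | z i k = true}) ∩
          ⋂ k : ℕ, ⋂ l : ℕ, {z : ℕ → ℕ → Bool | z i k = true → z i l = true → k = l}) := by
      ext z
      simp only [mem_range, mem_iInter, mem_inter_iff, mem_iUnion, mem_ofPred_eq]
      constructor
      · rintro ⟨x, rfl⟩ i
        simp only [Pi.map_apply, decide_eq_true_eq]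
        exact ⟨⟨_, rfl⟩, fun k l hk hl => hk.symm.trans hl⟩
      · intro hz
        choose x hx using fun i => (hz i).1
        refine ⟨x, ?_⟩
        funext i k
        rw [Pi.map_apply, Bool.eq_iff_iff, decide_eq_true_eq]
        exact ⟨fun h => h ▸ hx i, fun h => (hz i).2 _ _ (hx i) h⟩
    rw [this]
    have hc : ∀ i k : ℕ, Continuous fun z : ℕ → ℕ → Bool => z i k := fun i k => by fun_prop
    refine IsGδ.iInter fun i => IsGδ.inter ?_ ?_
    · exact (isOpen_iUnion fun k => (isOpen_discrete {true}).preimage (hc i k)).isGδ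
    · refine IsGδ.iInter fun k => IsGδ.iInter fun l => IsOpen.isGδ ?_
      exact (isOpen_discrete {p : Bool × Bool | p.1 = true → p.2 = true → k = l}).preimage
        ((hc i k).prodMk (hc i l))
  refine ⟨_, cantorSpaceHomeomorphNatToCantorSpace.symm.isEmbedding.comp
    (IsEmbedding.piMap fun _ => hd), ?_⟩
  rw [range_comp, Homeomorph.image_symm]
  exact hG.preimage (Homeomorph.continuous _)

/-- On countable spaces every map is continuous on each piece of the closed cover by singletons, so
every bijection is a weak homeomorphism. -/
lemma weaklyHomeomorphic_nat {X : Type*} [TopologicalSpace X] [PolishSpace X] [Infinite X]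
    [Countable X] : WeaklyHomeomorphic X ℕ := by
  obtain ⟨e⟩ : Nonempty (X ≃ ℕ) := nonempty_equiv_of_countable
  refine ⟨e, e.symm, e.left_inv, e.right_inv, ?_, ?_⟩
  · exact .of_iUnion_isClosed (fun x => {x}) (fun _ => isClosed_singleton)
      (iUnion_of_singleton X) fun _ => continuousOn_singleton _ _
  · exact .of_iUnion_isClosed (fun x => {x}) (fun _ => isClosed_singleton)
      (iUnion_of_singleton ℕ) fun _ => continuousOn_singleton _ _

/-- A perfect subset gives a closed embedding of the Cantor space into `X`. Conversely `X` embeds in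
the Cantor space by a map that is closed on every compact set, and its image is `Gδ`. -/
lemma weaklyHomeomorphic_cantor {X : Type*} [TopologicalSpace X] [PolishSpace X]
    [SigmaCompactSpace X] (hzd : TopologicalSpace.IsTopologicalBasis {s : Set X | IsClopen s})
    (hX : ¬ Countable X) : WeaklyHomeomorphic X (ℕ → Bool) := by
  obtain ⟨g, -, hgc, hgi⟩ := isClosed_univ.exists_nat_bool_injection_of_not_countable
    (α := X) (by rwa [countable_univ_iff])
  obtain ⟨h, hh⟩ := exists_isClosedEmbedding_baire hzd
  obtain ⟨e, he, heG⟩ := exists_isEmbedding_cantor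
  have : PolishSpace (ℕ → Bool) := { }
  have hfc : Continuous (e ∘ h) := he.continuous.comp hh.continuous
  refine weaklyHomeomorphic_of_injections (f := e ∘ h) hfc (he.injective.comp hh.injective)
    (hgc.isClosedEmbedding hgi) (compactCovering X)
    (fun n => (isCompact_compactCovering X n).isClosed) (iUnion_compactCovering X) ?_ ?_
    (hfc.comp hgc).isClosedMap
  · exact fun n A hA hAn =>
      (((isCompact_compactCovering X n).of_isClosed_subset hA hAn).image hfc).isClosed
  · refine IsGδ.isFSigma_compl ?_
    obtain ⟨C, hC, hCh⟩ := he.isInducing.isClosed_iff.1 hh.isClosed_range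
    -- the image of a closed set is the trace of a closed set `C` on the `Gδ` set `range e`
    rw [range_comp, ← hCh, image_preimage_eq_inter_range]
    let := TopologicalSpace.upgradeIsCompletelyMetrizable (ℕ → Bool)
    exact hC.isGδ.inter heG

/-- The Baire space and `X` are homeomorphic to closed subspaces of each other. -/
lemma weaklyHomeomorphic_baire {X : Type*} [TopologicalSpace X] [PolishSpace X]
    (hzd : TopologicalSpace.IsTopologicalBasis {s : Set X | IsClopen s})
    (hX : ¬ SigmaCompactSpace X) : WeaklyHomeomorphic X (ℕ → ℕ) := by
  obtain ⟨g, hg⟩ := exists_isClosedEmbedding_of_not_sigmaCompact hzd hX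
  obtain ⟨f, hf⟩ := exists_isClosedEmbedding_baire hzd
  exact weaklyHomeomorphic_of_injections hf.continuous hf.injective hg (fun _ => univ)
    (fun _ => isClosed_univ) (iUnion_const univ) (fun _ A hA _ => hf.isClosedMap A hA)
    hf.isClosed_range.isOpen_compl.isFSigma (hf.isClosedMap.comp hg.isClosedMap)

theorem classification_zeroDim_polish
    {X : Type*} [TopologicalSpace X] [Infinite X] [PolishSpace X]
    (hzd : TopologicalSpace.IsTopologicalBasis {s : Set X | IsClopen s}) :
    WeaklyHomeomorphic X ℕ ∨ WeaklyHomeomorphic X (ℕ → Bool) ∨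
      WeaklyHomeomorphic X (ℕ → ℕ) := by
  by_cases hc : Countable X
  · exact Or.inl weaklyHomeomorphic_nat
  by_cases hs : SigmaCompactSpace X
  · exact Or.inr (Or.inl (weaklyHomeomorphic_cantor hzd hc))
  · exact Or.inr (Or.inr (weaklyHomeomorphic_baire hzd hs))
end

section
/- Every infinite zero-dimensional σ-compact metrizable topological space X is weakly homeomorphic to one of the following five spaces: the countably infinite discrete space ω, the Cantor space 2^ω, the rationals ℚ (with the topology inherited from ℝ), the topological sum ℚ ⊕ 2^ω, or the product ℚ × 2^ω. -/
/-!
The identity of a space, seen as a map into the sum of a closed set and its complement, or of the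
fibres of a function with open sublevel sets and well-ordered values, is a weak homeomorphism
(`closed_sum`, `sigma_fibers`): a space may be cut along a transfinite sequence of relatively open
pieces. In a zero-dimensional σ-compact metrizable space, relatively open points, copies of `ℚ` and
copies of `2^ω` (up to weak homeomorphism) are removed as long as there are any; by second
countability this takes countably many steps (`exists_decomposition`). The closed kernel which
remains is crowded, and is nowhere countable by Sierpiński's theorem (`homeomorph_rat`) and nowhere
compact by Brouwer's theorem (`nonempty_homeomorph_cantor`). If nonempty it is therefore
homeomorphic to `ℚ × 2^ω` (`homeomorph_rat_prod_cantor`).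

The characterizations of `ℚ` and of `ℚ × 2^ω` are two cases of one theorem,
`IsExhausted.homeomorph`, with `C` a point or `C = 2^ω`. A space which is exhausted by nowhere dense
retracts homeomorphic to `C` is decomposed along a tree of words (`Scheme`): inside each clopen set
`Q s` lies a copy of `C`, and the complement of the copy in `Q s` is split into countably many
clopen sets accumulating at the copy in a standard way. Every point belongs to exactly one copy, and
the basic neighbourhoods of a point are determined by the word of its copy and by its position
there, so the topology is determined by `C` (`Scheme.homeomorph`).

Each of `ℚ`, `2^ω` and `ℚ × 2^ω` is weakly homeomorphic to the sum of countably many copies of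
itself, and consequently absorbs countably many copies of any space which embeds in it as a closed
subset (`IsSelfSum.absorb`). This reduces the sum obtained from the decomposition to five cases.
-/

open Set Function Topology

/-! ### Calculus of weak homeomorphisms -/

infix:25 " ≋ " => WeaklyHomeomorphic

section Calculus

variable {X Y Z : Type*} [TopologicalSpace X] [TopologicalSpace Y] [TopologicalSpace Z]

theorem weaklyDiscontinuous_of_exists {f : X → Y}
    (h : ∀ A : Set X, A.Nonempty → ∃ V, IsOpen V ∧ (A ∩ V).Nonempty ∧ ContinuousOn f (A ∩ V)) :
    WeaklyDiscontinuous f := fun A hA => by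
  obtain ⟨V, hV, hne, hc⟩ := h A hA
  exact ⟨A ∩ V, inter_subset_left, hne, ⟨V, hV, rfl⟩, hc⟩

theorem WeaklyDiscontinuous.exists_open {f : X → Y} (hf : WeaklyDiscontinuous f) {A : Set X}
    (hA : A.Nonempty) : ∃ V, IsOpen V ∧ (A ∩ V).Nonempty ∧ ContinuousOn f (A ∩ V) := by
  obtain ⟨_, -, hne, ⟨V, hV, rfl⟩, hc⟩ := hf A hA
  exact ⟨V, hV, hne, hc⟩

theorem Continuous.weaklyDiscontinuous {f : X → Y} (hf : Continuous f) : WeaklyDiscontinuous f :=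
  weaklyDiscontinuous_of_exists fun A hA => ⟨univ, isOpen_univ, by simpa using hA, hf.continuousOn⟩

theorem WeaklyDiscontinuous.comp {g : Y → Z} {f : X → Y} (hg : WeaklyDiscontinuous g)
    (hf : WeaklyDiscontinuous f) : WeaklyDiscontinuous (g ∘ f) := by
  refine weaklyDiscontinuous_of_exists fun A hA => ?_
  obtain ⟨V, hV, hne, hc⟩ := hf.exists_open hA
  obtain ⟨W, hW, ⟨_, ⟨x, hx, rfl⟩, hxW⟩, hc'⟩ := hg.exists_open (hne.image f)
  obtain ⟨V', hV', he⟩ := continuousOn_iff'.1 hc W hW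
  have key : ∀ y, y ∈ A ∩ (V ∩ V') → y ∈ A ∩ V ∧ f y ∈ W := fun y hy => by
    have h1 : y ∈ A ∩ V := ⟨hy.1, hy.2.1⟩
    have h2 : y ∈ V' ∩ (A ∩ V) := ⟨hy.2.2, h1⟩
    rw [← he] at h2
    exact ⟨h1, h2.1⟩
  have hx' : x ∈ f ⁻¹' W ∩ (A ∩ V) := ⟨hxW, hx⟩
  rw [he] at hx'
  exact ⟨V ∩ V', hV.inter hV', ⟨x, hx.1, hx.2, hx'.1⟩,
    hc'.comp (hc.mono fun y hy => (key y hy).1)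
      fun y hy => ⟨mem_image_of_mem f (key y hy).1, (key y hy).2⟩⟩

namespace WeaklyHomeomorphic

theorem of_continuous (f : X → Y) (g : Y → X) (h1 : LeftInverse g f) (h2 : RightInverse g f)
    (hf : Continuous f) (hg : Continuous g) : X ≋ Y :=
  ⟨f, g, h1, h2, hf.weaklyDiscontinuous, hg.weaklyDiscontinuous⟩

theorem of_homeomorph (e : X ≃ₜ Y) : X ≋ Y :=
  of_continuous e e.symm e.left_inv e.right_inv e.continuous e.symm.continuous

theorem rfl' : X ≋ X := of_homeomorph (Homeomorph.refl X)

theorem symm (h : X ≋ Y) : Y ≋ X := by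
  obtain ⟨f, g, h1, h2, hf, hg⟩ := h
  exact ⟨g, f, h2, h1, hg, hf⟩

theorem trans (h : X ≋ Y) (h' : Y ≋ Z) : X ≋ Z := by
  obtain ⟨f, g, h1, h2, hf, hg⟩ := h
  obtain ⟨f', g', h1', h2', hf', hg'⟩ := h'
  exact ⟨f' ∘ f, g ∘ g', fun x => by simp [h1' _, h1 _], fun x => by simp [h2' _, h2 _],
    hf'.comp hf, hg.comp hg'⟩

end WeaklyHomeomorphic

open WeaklyHomeomorphic

theorem WeaklyDiscontinuous.sigma_map {J : Type*} {F G : J → Type*}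
    [∀ j, TopologicalSpace (F j)] [∀ j, TopologicalSpace (G j)] {f : ∀ j, F j → G j}
    (hf : ∀ j, WeaklyDiscontinuous (f j)) :
    WeaklyDiscontinuous (Sigma.map id f : (Σ j, F j) → Σ j, G j) := by
  refine weaklyDiscontinuous_of_exists ?_
  rintro A ⟨⟨j, x⟩, hx⟩
  obtain ⟨V, hV, hne, hc⟩ := (hf j).exists_open (A := Sigma.mk j ⁻¹' A) ⟨x, hx⟩
  refine ⟨Sigma.mk j '' V, isOpenMap_sigmaMk V hV, ?_, ?_⟩
  · obtain ⟨y, hy, hyV⟩ := hne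
    exact ⟨⟨j, y⟩, hy, mem_image_of_mem _ hyV⟩
  · have : A ∩ Sigma.mk j '' V = Sigma.mk j '' (Sigma.mk j ⁻¹' A ∩ V) := by
      rw [image_preimage_inter]
    rw [this, Topology.IsOpenEmbedding.sigmaMk.continuousOn_image_iff]
    exact continuous_sigmaMk.comp_continuousOn hc

theorem WeaklyDiscontinuous.sum_map {X' Y' : Type*} [TopologicalSpace X'] [TopologicalSpace Y']
    {u : X → X'} {v : Y → Y'} (hu : WeaklyDiscontinuous u) (hv : WeaklyDiscontinuous v) :
    WeaklyDiscontinuous (Sum.map u v) := by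
  refine weaklyDiscontinuous_of_exists ?_
  rintro S ⟨x | x, hx⟩
  · obtain ⟨V, hV, ⟨y, hy, hyV⟩, hc⟩ := hu.exists_open (A := Sum.inl ⁻¹' S) ⟨x, hx⟩
    refine ⟨Sum.inl '' V, isOpenMap_inl V hV, ⟨.inl y, hy, mem_image_of_mem _ hyV⟩, ?_⟩
    rw [← image_preimage_inter, IsOpenEmbedding.inl.continuousOn_image_iff]
    exact continuous_inl.comp_continuousOn hc
  · obtain ⟨V, hV, ⟨y, hy, hyV⟩, hc⟩ := hv.exists_open (A := Sum.inr ⁻¹' S) ⟨x, hx⟩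
    refine ⟨Sum.inr '' V, isOpenMap_inr V hV, ⟨.inr y, hy, mem_image_of_mem _ hyV⟩, ?_⟩
    rw [← image_preimage_inter, IsOpenEmbedding.inr.continuousOn_image_iff]
    exact continuous_inr.comp_continuousOn hc

namespace WeaklyHomeomorphic

theorem sigma {J : Type*} {F G : J → Type*}
    [∀ j, TopologicalSpace (F j)] [∀ j, TopologicalSpace (G j)] (h : ∀ j, F j ≋ G j) :
    (Σ j, F j) ≋ (Σ j, G j) := by
  choose f g h1 h2 hf hg using h
  refine ⟨Sigma.map id f, Sigma.map id g, ?_, ?_, .sigma_map hf, .sigma_map hg⟩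
  · rintro ⟨j, x⟩; simp [Sigma.map, h1 j x]
  · rintro ⟨j, x⟩; simp [Sigma.map, h2 j x]

theorem sum {X' Y' : Type*} [TopologicalSpace X'] [TopologicalSpace Y'] (h : X ≋ X')
    (h' : Y ≋ Y') : (X ⊕ Y) ≋ (X' ⊕ Y') := by
  obtain ⟨f, g, h1, h2, hf, hg⟩ := h
  obtain ⟨f', g', h1', h2', hf', hg'⟩ := h'
  refine ⟨Sum.map f f', Sum.map g g', ?_, ?_, hf.sum_map hf', hg.sum_map hg'⟩
  · rintro (x | x) <;> simp [h1 _, h1' _]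
  · rintro (x | x) <;> simp [h2 _, h2' _]

theorem sum_comm' : (X ⊕ Y) ≋ (Y ⊕ X) := of_homeomorph (Homeomorph.sumComm X Y)

theorem sum_assoc' : ((X ⊕ Y) ⊕ Z) ≋ (X ⊕ (Y ⊕ Z)) := of_homeomorph (Homeomorph.sumAssoc X Y Z)

theorem empty_sum [IsEmpty X] : (X ⊕ Y) ≋ Y := of_homeomorph (Homeomorph.emptySum Y X)

theorem sum_empty [IsEmpty Y] : (X ⊕ Y) ≋ X := of_homeomorph (Homeomorph.sumEmpty X Y)

theorem sigma_reindex {I J : Type*} (e : I ≃ J) : (Σ _ : I, X) ≋ (Σ _ : J, X) :=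
  of_continuous (fun p => ⟨e p.1, p.2⟩) (fun p => ⟨e.symm p.1, p.2⟩)
    (fun p => by simp) (fun p => by simp)
    (continuous_sigma fun i => continuous_sigmaMk (σ := fun _ : J => X) (i := e i))
    (continuous_sigma fun j => continuous_sigmaMk (σ := fun _ : I => X) (i := e.symm j))

theorem sigma_prod {I J : Type*} : (Σ _ : I, Σ _ : J, X) ≋ (Σ _ : I × J, X) :=
  of_continuous (fun p => ⟨(p.1, p.2.1), p.2.2⟩) (fun p => ⟨p.1.1, p.1.2, p.2⟩)
    (fun _ => rfl) (fun _ => rfl)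
    (continuous_sigma fun i => continuous_sigma fun j => continuous_sigmaMk (σ := fun _ : I × J => X)
      (i := (i, j)))
    (continuous_sigma fun i => (continuous_sigmaMk (σ := fun _ : I => Σ _ : J, X) (i := i.1)).comp
      (continuous_sigmaMk (σ := fun _ : J => X) (i := i.2)))

theorem sigma_add {I J : Type*} : (Σ _ : I ⊕ J, X) ≋ ((Σ _ : I, X) ⊕ (Σ _ : J, X)) := by
  refine of_continuous
    (fun x => match x with | ⟨.inl i, x⟩ => .inl ⟨i, x⟩ | ⟨.inr j, x⟩ => .inr ⟨j, x⟩)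
    (Sum.elim (fun p => ⟨.inl p.1, p.2⟩) fun p => ⟨.inr p.1, p.2⟩) ?_ ?_ ?_ ?_
  · rintro ⟨_ | _, x⟩ <;> rfl
  · rintro (x | x) <;> rfl
  · refine continuous_sigma ?_
    rintro (i | j)
    · exact continuous_inl.comp (continuous_sigmaMk (σ := fun _ : I => X))
    · exact continuous_inr.comp (continuous_sigmaMk (σ := fun _ : J => X))
  · exact (continuous_sigma fun i => continuous_sigmaMk (σ := fun _ : I ⊕ J => X) (i := .inl i)).sumElim
      (continuous_sigma fun j => continuous_sigmaMk (σ := fun _ : I ⊕ J => X) (i := .inr j))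

theorem sigma_sum {J : Type*} : (Σ _ : J, (X ⊕ Y)) ≋ ((Σ _ : J, X) ⊕ (Σ _ : J, Y)) := by
  refine of_continuous
    (fun p => Sum.map (Sigma.mk p.1) (Sigma.mk p.1) p.2)
    (Sum.elim (fun p => ⟨p.1, .inl p.2⟩) fun p => ⟨p.1, .inr p.2⟩) ?_ ?_ ?_ ?_
  · rintro ⟨j, x | x⟩ <;> rfl
  · rintro (x | x) <;> rfl
  · exact continuous_sigma fun j => (continuous_sigmaMk (σ := fun _ : J => X)).sumMap
      (continuous_sigmaMk (σ := fun _ : J => Y))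
  · exact (continuous_sigma fun j =>
        (continuous_sigmaMk (σ := fun _ : J => X ⊕ Y) (i := j)).comp continuous_inl).sumElim
      (continuous_sigma fun j =>
        (continuous_sigmaMk (σ := fun _ : J => X ⊕ Y) (i := j)).comp continuous_inr)

theorem sigma_split {J : Type*} (p : J → Prop) (F : J → Type*) [∀ j, TopologicalSpace (F j)] :
    (Σ j, F j) ≋ ((Σ j : {j // p j}, F j) ⊕ (Σ j : {j // ¬ p j}, F j)) := by
  classical
  refine of_continuous
    (fun x => if h : p x.1 then .inl ⟨⟨x.1, h⟩, x.2⟩ else .inr ⟨⟨x.1, h⟩, x.2⟩)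
    (Sum.elim (fun x => ⟨x.1, x.2⟩) fun x => ⟨x.1, x.2⟩) ?_ ?_ ?_ ?_
  · rintro ⟨j, x⟩
    by_cases h : p j <;> simp [h]
  · rintro (⟨⟨j, h⟩, x⟩ | ⟨⟨j, h⟩, x⟩) <;> simp [h]
  · refine continuous_sigma fun j => ?_
    by_cases h : p j
    · simp only [h, dite_true]
      exact continuous_inl.comp
        (continuous_sigmaMk (σ := fun j : {j // p j} => F j) (i := ⟨j, h⟩))
    · simp only [h, dite_false]
      exact continuous_inr.comp
        (continuous_sigmaMk (σ := fun j : {j // ¬ p j} => F j) (i := ⟨j, h⟩))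
  · exact (continuous_sigma fun j => continuous_sigmaMk).sumElim
      (continuous_sigma fun j => continuous_sigmaMk)

/-- A space is weakly homeomorphic to the topological sum of the fibres of a function `ρ` with
open sublevel sets and well-ordered values: on a nonempty set `A` the values of `ρ` have a minimum,
and the points of `A` where it is attained form a relatively open subset of `A` inside one fibre. -/
theorem sigma_fibers {J : Type*} [LinearOrder J] [WellFoundedLT J] (ρ : X → J)
    (h : ∀ j, IsOpen {x | ρ x ≤ j}) : X ≋ (Σ j, ρ ⁻¹' {j}) := by
  refine ⟨fun x => ⟨ρ x, x, rfl⟩, fun p => p.2.1, fun x => rfl, ?_, ?_,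
    Continuous.weaklyDiscontinuous (continuous_sigma fun j => continuous_subtype_val)⟩
  · rintro ⟨j, x, rfl⟩
    rfl
  · have aux : ∀ {x : X} {j : J} (hx : ρ x = j),
        (⟨ρ x, x, rfl⟩ : Σ j, ρ ⁻¹' {j}) = ⟨j, x, hx⟩ := by
      rintro x _ rfl
      rfl
    refine weaklyDiscontinuous_of_exists fun A hA => ?_
    obtain ⟨_, ⟨a, ha, rfl⟩, hmin⟩ := WellFounded.has_min (wellFounded_lt (α := J)) _ (hA.image ρ)
    refine ⟨{x | ρ x ≤ ρ a}, h _, ⟨a, ha, le_rfl⟩, ?_⟩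
    have hρ : ∀ x ∈ A ∩ {x | ρ x ≤ ρ a}, ρ x = ρ a := fun x hx =>
      le_antisymm hx.2 (not_lt.1 (hmin _ (mem_image_of_mem ρ hx.1)))
    rw [continuousOn_iff_continuous_domRestrict]
    have : (A ∩ {x | ρ x ≤ ρ a}).domRestrict (fun x => (⟨ρ x, x, rfl⟩ : Σ j, ρ ⁻¹' {j})) =
        fun x => ⟨ρ a, x.1, hρ x x.2⟩ := by
      funext ⟨x, hx⟩
      exact aux (hρ x hx)
    rw [this]
    exact continuous_sigmaMk.comp (continuous_subtype_val.subtype_mk _)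

/-- A space can be cut along a closed set `F`: a nonempty set either lies in `F`, or its trace on the
open set `Fᶜ` is a nonempty relatively open part of it. -/
theorem closed_sum {F : Set X} (hF : IsClosed F) : X ≋ (F ⊕ (Fᶜ : Set X)) := by
  classical
  refine ⟨fun x => if h : x ∈ F then .inl ⟨x, h⟩ else .inr ⟨x, h⟩,
    Sum.elim Subtype.val Subtype.val, fun x => ?_, ?_, ?_,
    (continuous_subtype_val.sumElim continuous_subtype_val).weaklyDiscontinuous⟩
  · by_cases h : x ∈ F <;> simp [h]
  · rintro (⟨x, hx⟩ | ⟨x, hx⟩)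
    · simp [hx]
    · have : x ∉ F := hx
      simp [this]
  · refine weaklyDiscontinuous_of_exists fun A hA => ?_
    by_cases hAF : (A ∩ Fᶜ).Nonempty
    · refine ⟨Fᶜ, hF.isOpen_compl, hAF, ?_⟩
      rw [continuousOn_iff_continuous_domRestrict]
      have : (A ∩ Fᶜ).domRestrict (fun x => if h : x ∈ F then (.inl ⟨x, h⟩ : F ⊕ (Fᶜ : Set X))
          else .inr ⟨x, h⟩) = fun x => .inr ⟨x.1, x.2.2⟩ := by
        funext ⟨x, hx⟩
        exact dif_neg hx.2
      rw [this]
      exact continuous_inr.comp (continuous_subtype_val.subtype_mk _)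
    · have hsub : ∀ x ∈ A, x ∈ F := fun x hx => by
        by_contra h
        exact hAF ⟨x, hx, h⟩
      refine ⟨univ, isOpen_univ, by simpa using hA, ?_⟩
      rw [inter_univ, continuousOn_iff_continuous_domRestrict]
      have : A.domRestrict (fun x => if h : x ∈ F then (.inl ⟨x, h⟩ : F ⊕ (Fᶜ : Set X))
          else .inr ⟨x, h⟩) = fun x => .inl ⟨x.1, hsub x x.2⟩ := by
        funext ⟨x, hx⟩
        exact dif_pos (hsub x hx)
      rw [this]
      exact continuous_inl.comp (continuous_subtype_val.subtype_mk _)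

end WeaklyHomeomorphic

end Calculus

/-! ### Zero-dimensional spaces and the characterization of the Cantor space -/

open TopologicalSpace

/-- Zero-dimensionality: the clopen sets form a base of the topology. -/
abbrev ZeroDim (X : Type*) [TopologicalSpace X] : Prop :=
  IsTopologicalBasis {s : Set X | IsClopen s}

section ZeroDim

variable {X Y : Type*} [TopologicalSpace X] [TopologicalSpace Y]

theorem zeroDim_of_exists (h : ∀ (x : X) (U : Set X), x ∈ U → IsOpen U →
    ∃ V, IsClopen V ∧ x ∈ V ∧ V ⊆ U) : ZeroDim X :=
  isTopologicalBasis_of_isOpen_of_nhds (fun _ hu => IsClopen.isOpen hu) h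

theorem ZeroDim.exists_clopen (h : ZeroDim X) {x : X} {U : Set X} (hx : x ∈ U) (hU : IsOpen U) :
    ∃ V, IsClopen V ∧ x ∈ V ∧ V ⊆ U :=
  h.exists_subset_of_mem_open hx hU

theorem ZeroDim.of_isInducing (h : ZeroDim Y) {f : X → Y} (hf : IsInducing f) : ZeroDim X := by
  refine zeroDim_of_exists fun x U hx hU => ?_
  obtain ⟨W, hW, rfl⟩ := hf.isOpen_iff.1 hU
  obtain ⟨V, hV, hxV, hVW⟩ := h.exists_clopen (show f x ∈ W from hx) hW
  exact ⟨f ⁻¹' V, hV.preimage hf.continuous, hxV, preimage_mono hVW⟩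

theorem ZeroDim.subtype (h : ZeroDim X) (S : Set X) : ZeroDim S :=
  h.of_isInducing IsInducing.subtypeVal

theorem ZeroDim.prod (h : ZeroDim X) (h' : ZeroDim Y) : ZeroDim (X × Y) := by
  refine zeroDim_of_exists fun x U hx hU => ?_
  obtain ⟨A, B, hA, hB, hxA, hxB, hAB⟩ := isOpen_prod_iff.1 hU x.1 x.2 hx
  obtain ⟨V, hV, hxV, hVA⟩ := h.exists_clopen hxA hA
  obtain ⟨W, hW, hxW, hWB⟩ := h'.exists_clopen hxB hB
  exact ⟨V ×ˢ W, hV.prod hW, ⟨hxV, hxW⟩, (prod_mono hVA hWB).trans hAB⟩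

theorem zeroDim_of_compact [CompactSpace X] [T2Space X] [TotallyDisconnectedSpace X] : ZeroDim X :=
  zeroDim_of_exists fun _ _ hx hU => compact_exists_isClopen_in_isOpen hU hx

/-- In a countable metrizable space all but countably many balls about a point have an empty
sphere, so arbitrarily small balls are clopen. -/
theorem zeroDim_of_countable [MetrizableSpace X] [Countable X] : ZeroDim X := by
  let := metrizableSpaceMetric X
  refine zeroDim_of_exists fun x U hx hU => ?_
  obtain ⟨ε, hε, hεU⟩ := Metric.isOpen_iff.1 hU x hx
  have hc : (range fun y => dist y x).Countable := countable_range _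
  obtain ⟨r, hr, hr'⟩ : ∃ r ∈ Ioo 0 ε, r ∉ range fun y => dist y x := by
    by_contra! hcon
    have h1 : (Ioo (0 : ℝ) ε).Countable := hc.mono hcon
    have h2 := Cardinal.mk_Ioo_real hε
    rw [← Cardinal.le_aleph0_iff_set_countable, h2] at h1
    exact absurd h1 (not_le.2 Cardinal.aleph0_lt_continuum)
  refine ⟨Metric.ball x r, ⟨?_, Metric.isOpen_ball⟩, Metric.mem_ball_self hr.1,
    (Metric.ball_subset_ball hr.2.le).trans hεU⟩
  have : Metric.ball x r = Metric.closedBall x r := by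
    ext y
    exact ⟨fun h => Metric.ball_subset_closedBall h, fun h => lt_of_le_of_ne h fun h' => hr' ⟨y, h'⟩⟩
  rw [this]
  exact Metric.isClosed_closedBall

/-- In a zero-dimensional space, a clopen set fits between a compact set and an open
neighbourhood of it. -/
theorem ZeroDim.exists_clopen_between (h : ZeroDim X) {K O : Set X} (hK : IsCompact K)
    (hO : IsOpen O) (hKO : K ⊆ O) : ∃ N, IsClopen N ∧ K ⊆ N ∧ N ⊆ O := by
  refine hK.induction_on (p := fun S => ∃ N, IsClopen N ∧ S ⊆ N ∧ N ⊆ O) ?_ ?_ ?_ ?_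
  · exact ⟨∅, isClopen_empty, subset_rfl, empty_subset _⟩
  · rintro S T hST ⟨N, h1, h2, h3⟩
    exact ⟨N, h1, hST.trans h2, h3⟩
  · rintro S T ⟨N, h1, h2, h3⟩ ⟨N', h1', h2', h3'⟩
    exact ⟨N ∪ N', h1.union h1', union_subset_union h2 h2', union_subset h3 h3'⟩
  · intro x hx
    obtain ⟨V, hV, hxV, hVO⟩ := h.exists_clopen (hKO hx) hO
    exact ⟨V, mem_nhdsWithin_of_mem_nhds (hV.isOpen.mem_nhds hxV), V, hV, subset_rfl, hVO⟩

/-- A clopen set of a crowded zero-dimensional space splits into two nonempty clopen parts, each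
lying on one side of a given clopen set `B`. -/
theorem ZeroDim.exists_split [T1Space X] [PerfectSpace X] (h : ZeroDim X) {U B : Set X}
    (hU : IsClopen U) (hne : U.Nonempty) (hB : IsClopen B) :
    ∃ V, IsClopen V ∧ (U ∩ V).Nonempty ∧ (U \ V).Nonempty ∧
      ∀ x ∈ U, ∀ y ∈ U, (x ∈ V ↔ y ∈ V) → (x ∈ B ↔ y ∈ B) := by
  by_cases h1 : (U ∩ B).Nonempty ∧ (U \ B).Nonempty
  · exact ⟨B, hB, h1.1, h1.2, fun x _ y _ => id⟩
  · obtain ⟨x, hx⟩ := hne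
    obtain ⟨y, ⟨hyU, -⟩, hyx⟩ := preperfect_iff_nhds.1 PerfectSpace.univ_preperfect x (mem_univ x) U
      (hU.isOpen.mem_nhds hx)
    obtain ⟨V, hV, hxV, hVy⟩ := h.exists_clopen (U := {y}ᶜ) (x := x) (fun h => hyx h.symm)
      isOpen_compl_singleton
    refine ⟨V, hV, ⟨x, hx, hxV⟩, ⟨y, hyU, fun h => hVy h rfl⟩, fun a ha b hb _ => ?_⟩
    by_contra hab
    apply h1
    by_cases haB : a ∈ B
    · exact ⟨⟨a, ha, haB⟩, ⟨b, hb, fun hbB => hab (by simp [haB, hbB])⟩⟩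
    · exact ⟨⟨b, hb, by_contra fun hbB => hab (by simp [haB, hbB])⟩, ⟨a, ha, haB⟩⟩

open Classical in
/-- The address of length `n` of a point in the binary subdivision scheme in which a cell `U` of
level `n` is cut along `V n U`. The latest digit comes first. -/
noncomputable def address (V : ℕ → Set X → Set X) : ℕ → X → List Bool
  | 0, _ => []
  | n + 1, x => decide (x ∈ V n {y | address V n y = address V n x}) :: address V n x

theorem address_succ_eq_cons {Z : Type*} (V : ℕ → Set Z → Set Z) (n : ℕ) (b : Bool)
    (s : List Bool) (x : Z) :
    address V (n + 1) x = b :: s ↔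
      address V n x = s ∧ (x ∈ V n {y | address V n y = s} ↔ b = true) := by
  classical
  rw [address, List.cons.injEq, and_comm]
  refine and_congr_right ?_
  rintro rfl
  cases b <;> simp

theorem isClopen_address {V : ℕ → Set X → Set X} (hV : ∀ n U, IsClopen (V n U)) (n : ℕ)
    (s : List Bool) : IsClopen {x | address V n x = s} := by
  induction n generalizing s with
  | zero =>
    by_cases h : [] = s
    · simpa [address, h] using isClopen_univ
    · simpa [address, h] using isClopen_empty
  | succ n ih =>
    rcases s with _ | ⟨b, s⟩
    · simpa [address] using isClopen_empty
    · simp only [address_succ_eq_cons, Set.ofPred_and]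
      refine (ih s).inter ?_
      cases b
      · simp only [Bool.false_eq_true, iff_false]
        exact (hV n _).compl
      · simpa using hV n _

/-- Brouwer's characterization of the Cantor space. The space is subdivided into clopen cells
indexed by binary words; the `n`-th subdivision respects the `n`-th set of a countable clopen base,
so that distinct points have distinct infinite addresses. -/
theorem nonempty_homeomorph_cantor [CompactSpace X] [T2Space X] [SecondCountableTopology X]
    [PerfectSpace X] [Nonempty X] (h : ZeroDim X) : Nonempty (X ≃ₜ (ℕ → Bool)) := by
  classical
  obtain ⟨b, hbs, hbc, hb⟩ := h.exists_countable
  have hbne : b.Nonempty := by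
    obtain ⟨x⟩ := ‹Nonempty X›
    obtain ⟨V, hV, -⟩ := hb.exists_subset_of_mem_open (mem_univ x) isOpen_univ
    exact ⟨V, hV⟩
  obtain ⟨B, rfl⟩ := hbc.exists_eq_range hbne
  have hBc : ∀ n, IsClopen (B n) := fun n => hbs ⟨n, rfl⟩
  have key : ∀ (n : ℕ) (U : Set X), ∃ V, IsClopen V ∧ (IsClopen U → U.Nonempty →
      (U ∩ V).Nonempty ∧ (U \ V).Nonempty ∧
      ∀ x ∈ U, ∀ y ∈ U, (x ∈ V ↔ y ∈ V) → (x ∈ B n ↔ y ∈ B n)) := fun n U => by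
    by_cases hU : IsClopen U ∧ U.Nonempty
    · obtain ⟨V, h1, h2⟩ := h.exists_split hU.1 hU.2 (hBc n)
      exact ⟨V, h1, fun _ _ => h2⟩
    · exact ⟨∅, isClopen_empty, fun h1 h2 => absurd ⟨h1, h2⟩ hU⟩
  choose V hV hV' using key
  let f : X → ℕ → Bool := fun x n => decide (x ∈ V n {y | address V n y = address V n x})
  have hadd : ∀ x n, address V (n + 1) x = f x n :: address V n x := fun x n => rfl
  have hcont : Continuous f := by
    refine continuous_pi fun n => ?_
    refine continuous_discrete_rng.2 fun c => ?_
    have : (fun x => f x n) ⁻¹' {c} = ⋃ s, {x | address V (n + 1) x = c :: s} := by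
      ext x
      simp [hadd]
    rw [this]
    exact isOpen_iUnion fun s => (isClopen_address hV _ _).isOpen
  have hinj : Injective f := by
    intro x y hxy
    have h1 : ∀ n, address V n x = address V n y := fun n => by
      induction n with
      | zero => rfl
      | succ n ih => rw [hadd, hadd, hxy, ih]
    by_contra hne
    obtain ⟨_, ⟨n, rfl⟩, hxn, hny⟩ := hb.exists_subset_of_mem_open (a := x) (u := {y}ᶜ) hne
      isOpen_compl_singleton
    have h2 := (hV' n {z | address V n z = address V n y} (isClopen_address hV _ _) ⟨y, rfl⟩).2.2
      x (h1 n) y rfl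
    have h3 := congrFun hxy n
    simp only [f, h1 n, decide_eq_decide] at h3
    exact hny ((h2 h3).1 hxn) rfl
  have hsurj : Surjective f := by
    intro c
    let sl : ℕ → List Bool := fun n => Nat.rec [] (fun n s => c n :: s) n
    -- The address `sl n` prescribed by `c` is that of a nonempty cell; by compactness some point
    -- lies in all these cells.
    have hsl : ∀ n, {x | address V n x = sl n}.Nonempty := fun n => by
      induction n with
      | zero =>
        obtain ⟨x⟩ := ‹Nonempty X›
        exact ⟨x, rfl⟩
      | succ n ih =>
        have h2 := hV' n _ (isClopen_address hV n (sl n)) ih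
        have h3 : sl (n + 1) = c n :: sl n := rfl
        simp only [h3, address_succ_eq_cons]
        cases hc : c n
        · obtain ⟨x, hx, hx'⟩ := h2.2.1
          exact ⟨x, hx, by simpa using hx'⟩
        · obtain ⟨x, hx, hx'⟩ := h2.1
          exact ⟨x, hx, by simpa using hx'⟩
    obtain ⟨x, hx⟩ := IsCompact.nonempty_iInter_of_sequence_nonempty_isCompact_isClosed
      (fun n => {x | address V n x = sl n}) (fun n x hx => by
        have : address V (n + 1) x = c n :: sl n := hx
        rw [hadd] at this
        exact (List.cons.inj this).2) hsl
      (isClopen_address hV _ _).isClosed.isCompact fun n => (isClopen_address hV _ _).isClosed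
    refine ⟨x, funext fun n => ?_⟩
    have : address V (n + 1) x = c n :: sl n := mem_iInter.1 hx (n + 1)
    rw [hadd] at this
    exact (List.cons.inj this).1
  exact ⟨Continuous.homeoOfEquivCompactToT2 (f := Equiv.ofBijective f ⟨hinj, hsurj⟩) hcont⟩

theorem Preperfect.perfectSpace_coe {K : Set X} (hK : Preperfect K) : PerfectSpace K := by
  refine ⟨preperfect_iff_nhds.2 fun x _ U hU => ?_⟩
  obtain ⟨W, hW, hWU⟩ := mem_nhds_subtype K x U |>.1 hU
  obtain ⟨y, ⟨hyW, hyK⟩, hne⟩ := preperfect_iff_nhds.1 hK x x.2 W hW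
  exact ⟨⟨y, hyK⟩, ⟨hWU hyW, mem_univ _⟩, fun h => hne (congrArg Subtype.val h)⟩

theorem ZeroDim.homeomorph_cantor_of_preperfect [MetrizableSpace X] (h : ZeroDim X) {K : Set X}
    (hK : IsCompact K) (hp : Preperfect K) (hne : K.Nonempty) : Nonempty (K ≃ₜ (ℕ → Bool)) := by
  let := metrizableSpaceMetric X
  have := isCompact_iff_compactSpace.1 hK
  have := hp.perfectSpace_coe
  have := hne.to_subtype
  exact nonempty_homeomorph_cantor (h.subtype K)

end ZeroDim

/-! ### Uniqueness of spaces exhausted by nowhere dense copies of `C` -/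

section Scheme

variable {C : Type*}

/-- A sequence of partitions of `C` into finitely many open sets, each refining the preceding one,
which together generate the topology. The `k`-th partition is given by a function `π k` choosing
one point in each of its cells. -/
structure IsCylinderSystem [TopologicalSpace C] (π : ℕ → C → C) : Prop where
  finite_range : ∀ k, (range (π k)).Finite
  isClopen : ∀ k c, IsClopen {d | π k d = c}
  comp : ∀ {j k} c, j ≤ k → π j (π k c) = π j c
  basis : ∀ c, ∀ U ∈ 𝓝 c, ∃ k, ∀ d, π k d = π k c → d ∈ U

theorem IsCylinderSystem.mono [TopologicalSpace C] {π : ℕ → C → C} (hπ : IsCylinderSystem π)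
    {j k : ℕ} (hjk : j ≤ k) {c d : C} (h : π k c = π k d) : π j c = π j d := by
  rw [← hπ.comp c hjk, h, hπ.comp d hjk]

/-- A word is admissible when its letters `(k, d)` name actual cells of the `k`-th partition. -/
def Admissible (π : ℕ → C → C) (s : List (ℕ × C)) : Prop := ∀ p ∈ s, π p.1 p.2 = p.2

/-- A decomposition of `X` along the tree of words in letters `(k, d)`. The clopen set `Q s`
contains the copy `range (e s)` of `C`, onto which it is retracted by `e s ∘ r s`; the sets `N s k`
decrease from `Q s` to this copy, and the set `Q ((k, d) :: s)` consists of the points of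
`N s k \ N s (k + 1)` which are retracted into the `k`-th cell of `d`. The copies `range (e s)`
exhaust `X`. -/
structure Scheme (X : Type*) [TopologicalSpace X] (π : ℕ → C → C) where
  Q : List (ℕ × C) → Set X
  e : List (ℕ × C) → C → X
  r : List (ℕ × C) → X → C
  N : List (ℕ × C) → ℕ → Set X
  Q_nil : Q [] = univ
  Q_cons : ∀ k d s, Q ((k, d) :: s) = {x | x ∈ N s k ∧ x ∉ N s (k + 1) ∧ π k (r s x) = d}
  N_zero : ∀ {s}, Admissible π s → N s 0 = Q s
  N_anti : ∀ {s}, Admissible π s → Antitone (N s)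
  r_e : ∀ {s}, Admissible π s → ∀ c, r s (e s c) = c
  e_mem : ∀ {s}, Admissible π s → ∀ c k, e s c ∈ N s k
  isOpen : ∀ {s}, Admissible π s → ∀ k c, IsOpen {x | x ∈ N s k ∧ π k (r s x) = c}
  small : ∀ {s}, Admissible π s → ∀ c, ∀ V ∈ 𝓝 (e s c), ∃ k, ∀ x ∈ N s k,
    π k (r s x) = π k c → x ∈ V
  exhaust : ∀ x, ∃ s, Admissible π s ∧ ∃ c, e s c = x

namespace Scheme

variable {X Y : Type*} [TopologicalSpace X] [TopologicalSpace Y] {π : ℕ → C → C}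

/-- The word `s` of a copy `range (e s)` containing the given point. -/
noncomputable def code (S : Scheme X π) (x : X) : List (ℕ × C) := (S.exhaust x).choose

/-- The position of a point in the copy of `C` containing it. -/
noncomputable def coord (S : Scheme X π) (x : X) : C := (S.exhaust x).choose_spec.2.choose

theorem admissible_code (S : Scheme X π) (x : X) : Admissible π (S.code x) :=
  (S.exhaust x).choose_spec.1

theorem e_code_coord (S : Scheme X π) (x : X) : S.e (S.code x) (S.coord x) = x :=
  (S.exhaust x).choose_spec.2.choose_spec

theorem e_mem_Q (S : Scheme X π) {s} (hs : Admissible π s) (c : C) : S.e s c ∈ S.Q s :=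
  S.N_zero hs ▸ S.e_mem hs c 0

theorem mem_Q_code (S : Scheme X π) (x : X) : x ∈ S.Q (S.code x) := by
  have := S.e_mem_Q (S.admissible_code x) (S.coord x)
  rwa [e_code_coord] at this

theorem mem_Q_cons (S : Scheme X π) {x k d s} :
    x ∈ S.Q ((k, d) :: s) ↔ x ∈ S.N s k ∧ x ∉ S.N s (k + 1) ∧ π k (S.r s x) = d := by
  rw [S.Q_cons]; rfl

theorem mem_Q_tail (S : Scheme X π) {x p s} (hs : Admissible π (p :: s))
    (hx : x ∈ S.Q (p :: s)) : x ∈ S.Q s := by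
  have hs' : Admissible π s := fun q hq => hs q (List.mem_cons_of_mem _ hq)
  rw [← S.N_zero hs']
  exact S.N_anti hs' (Nat.zero_le _) (S.mem_Q_cons.1 hx).1

theorem mem_Q_append (S : Scheme X π) {x u s} (hs : Admissible π (u ++ s))
    (hx : x ∈ S.Q (u ++ s)) : x ∈ S.Q s := by
  induction u with
  | nil => exact hx
  | cons p u ih =>
    exact ih (fun q hq => hs q (List.mem_cons_of_mem _ hq)) (S.mem_Q_tail hs hx)

theorem eq_of_mem_Q (S : Scheme X π) {x : X} : ∀ {s t : List (ℕ × C)}, Admissible π s →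
    Admissible π t → s.length = t.length → x ∈ S.Q s → x ∈ S.Q t → s = t
  | [], [], _, _, _, _, _ => rfl
  | (k, d) :: s, (k', d') :: t, hs, ht, hl, hxs, hxt => by
    have hs' : Admissible π s := fun q hq => hs q (List.mem_cons_of_mem _ hq)
    have ht' : Admissible π t := fun q hq => ht q (List.mem_cons_of_mem _ hq)
    obtain rfl := S.eq_of_mem_Q hs' ht' (by simpa using hl) (S.mem_Q_tail hs hxs)
      (S.mem_Q_tail ht hxt)
    obtain ⟨h1, h2, h3⟩ := S.mem_Q_cons.1 hxs
    obtain ⟨h1', h2', h3'⟩ := S.mem_Q_cons.1 hxt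
    have hk : k = k' := by
      rcases lt_trichotomy k k' with h | h | h
      · exact absurd (S.N_anti hs' h h1') h2
      · exact h
      · exact absurd (S.N_anti hs' h h1) h2'
    subst hk
    rw [← h3, ← h3']

/-- The sets `Q s` and `Q t` can only meet if one of the words extends the other at its head. -/
theorem suffix_of_mem_Q (S : Scheme X π) {x : X} {s t : List (ℕ × C)} (hs : Admissible π s)
    (ht : Admissible π t) (hl : t.length ≤ s.length) (hxs : x ∈ S.Q s) (hxt : x ∈ S.Q t) :
    ∃ u, s = u ++ t := by
  have h1 : s.take (s.length - t.length) ++ s.drop (s.length - t.length) = s :=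
    List.take_append_drop _ _
  have h2 : Admissible π (s.drop (s.length - t.length)) := fun q hq =>
    hs q (List.mem_of_mem_drop hq)
  refine ⟨s.take (s.length - t.length), ?_⟩
  have h3 := S.eq_of_mem_Q h2 ht (by simp; omega)
    (S.mem_Q_append (by rwa [h1]) (by rwa [h1])) hxt
  exact h1.symm.trans (by rw [h3])

/-- A copy of `C` in the scheme is disjoint from all sets `Q t` with a strictly longer word. -/
theorem suffix_code (S : Scheme X π) {x : X} {t : List (ℕ × C)} (ht : Admissible π t)
    (hxt : x ∈ S.Q t) : ∃ u, S.code x = u ++ t := by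
  refine S.suffix_of_mem_Q (S.admissible_code x) ht ?_ (S.mem_Q_code x) hxt
  by_contra! hlt
  obtain ⟨u, rfl⟩ := S.suffix_of_mem_Q ht (S.admissible_code x) hlt.le hxt (S.mem_Q_code x)
  rcases u.eq_nil_or_concat with rfl | ⟨v, ⟨k, d⟩, rfl⟩
  · simp at hlt
  · rw [List.concat_eq_append, List.append_assoc] at ht hxt
    have := S.mem_Q_append ht hxt
    refine (S.mem_Q_cons.1 this).2.1 ?_
    have h2 := S.e_mem (S.admissible_code x) (S.coord x) (k + 1)
    rwa [e_code_coord] at h2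

theorem code_e (S : Scheme X π) {s : List (ℕ × C)} (hs : Admissible π s) (c : C) :
    S.code (S.e s c) = s := by
  set x := S.e s c with hx
  obtain ⟨u, hu⟩ := S.suffix_code hs (S.e_mem_Q hs c)
  rcases u.eq_nil_or_concat with rfl | ⟨v, ⟨k, d⟩, rfl⟩
  · exact hu
  · rw [List.concat_eq_append, List.append_assoc] at hu
    have h1 := S.mem_Q_code (S.e s c)
    have h2 := S.admissible_code (S.e s c)
    rw [hu] at h1 h2
    exact absurd (S.e_mem hs c (k + 1)) (S.mem_Q_cons.1 (S.mem_Q_append h2 h1)).2.1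

theorem coord_eq (S : Scheme X π) (x : X) : S.coord x = S.r (S.code x) x := by
  have := S.r_e (S.admissible_code x) (S.coord x)
  rw [S.e_code_coord] at this
  exact this.symm

theorem coord_e (S : Scheme X π) {s : List (ℕ × C)} (hs : Admissible π s) (c : C) :
    S.coord (S.e s c) = c := by
  rw [S.coord_eq, S.code_e hs, S.r_e hs]

theorem eq_e_of_forall_mem [T1Space X] (S : Scheme X π) {s : List (ℕ × C)} (hs : Admissible π s)
    {x : X} (hx : ∀ k, x ∈ S.N s k) : S.e s (S.r s x) = x := by
  by_contra hne
  obtain ⟨k, hk⟩ := S.small hs (S.r s x) {x}ᶜ (isOpen_compl_singleton.mem_nhds hne)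
  exact hk x (hx k) rfl rfl

/-- The basic neighbourhoods of a point are described in terms of codes and coordinates only. -/
theorem mem_basic_iff [TopologicalSpace C] [T1Space X] (S : Scheme X π)
    (hπ : IsCylinderSystem π) {s : List (ℕ × C)} (hs : Admissible π s) (k : ℕ) (c : C) (x : X) :
    (x ∈ S.N s k ∧ π k (S.r s x) = π k c) ↔
      (S.code x = s ∧ π k (S.coord x) = π k c) ∨
        ∃ u j d, S.code x = u ++ (j, d) :: s ∧ k ≤ j ∧ π k d = π k c := by
  constructor
  · rintro ⟨hx, hxc⟩
    by_cases hall : ∀ j, x ∈ S.N s j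
    · have h1 := S.eq_e_of_forall_mem hs hall
      left
      rw [← h1, S.code_e hs, S.coord_e hs]
      exact ⟨rfl, hxc⟩
    · right
      classical
      push Not at hall
      obtain ⟨j, hkj, hj, hj'⟩ : ∃ j, k ≤ j ∧ x ∈ S.N s j ∧ x ∉ S.N s (j + 1) := by
        have hpos : Nat.find hall ≠ 0 := fun h0 => by
          have := Nat.find_spec hall
          rw [h0] at this
          exact this (S.N_anti hs (Nat.zero_le k) hx)
        obtain ⟨j, hj⟩ := Nat.exists_eq_succ_of_ne_zero hpos
        refine ⟨j, ?_, by_contra fun h => Nat.find_min hall (by omega) h, by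
          have := Nat.find_spec hall; rwa [hj] at this⟩
        by_contra! hlt
        exact Nat.find_spec hall (S.N_anti hs (by omega) hx)
      have hadm : Admissible π ((j, π j (S.r s x)) :: s) := by
        rintro p (_ | ⟨_, hp⟩)
        · exact hπ.comp _ le_rfl
        · exact hs p hp
      obtain ⟨u, hu⟩ := S.suffix_code hadm (S.mem_Q_cons.2 ⟨hj, hj', rfl⟩)
      exact ⟨u, j, _, hu, hkj, by rw [hπ.comp _ hkj, hxc]⟩
  · rintro (⟨hs', hc⟩ | ⟨u, j, d, hu, hkj, hd⟩)
    · have h1 := S.e_mem hs (S.coord x) k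
      subst hs'
      rw [S.e_code_coord] at h1
      exact ⟨h1, by rwa [← S.coord_eq]⟩
    · have h1 := S.mem_Q_code x
      have h2 := S.admissible_code x
      rw [hu] at h1 h2
      obtain ⟨h3, -, h4⟩ := S.mem_Q_cons.1 (S.mem_Q_append h2 h1)
      exact ⟨S.N_anti hs hkj h3, by rw [← hπ.comp _ hkj, h4, hd]⟩

/-- The map between two spaces with schemes which preserves codes and coordinates. -/
noncomputable def transfer (S : Scheme X π) (T : Scheme Y π) (x : X) : Y :=
  T.e (S.code x) (S.coord x)

theorem continuous_transfer [TopologicalSpace C] [T1Space X] [T1Space Y]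
    (S : Scheme X π) (T : Scheme Y π) (hπ : IsCylinderSystem π) : Continuous (S.transfer T) := by
  refine continuous_iff_continuousAt.2 fun x V hV => ?_
  have hs := S.admissible_code x
  obtain ⟨k, hk⟩ := T.small hs (S.coord x) V hV
  have hx : x ∈ {y | y ∈ S.N (S.code x) k ∧
      π k (S.r (S.code x) y) = π k (S.coord x)} :=
    (S.mem_basic_iff hπ hs k _ x).2 (Or.inl ⟨rfl, rfl⟩)
  refine Filter.mem_map.2 (Filter.mem_of_superset ((S.isOpen hs k _).mem_nhds hx) fun y hy => ?_)
  have h1 := (S.mem_basic_iff hπ hs k _ y).1 hy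
  have h2 := (T.mem_basic_iff hπ hs k (S.coord x) (S.transfer T y)).2 (by
    rwa [transfer, T.code_e (S.admissible_code y), T.coord_e (S.admissible_code y)])
  exact hk _ h2.1 h2.2

theorem transfer_transfer (S : Scheme X π) (T : Scheme Y π) (x : X) :
    T.transfer S (S.transfer T x) = x := by
  rw [transfer, transfer, T.code_e (S.admissible_code x), T.coord_e (S.admissible_code x),
    S.e_code_coord]

/-- All spaces with a scheme over the same partitions of `C` are homeomorphic, because the codes
and coordinates of points determine the topology. -/
theorem homeomorph [TopologicalSpace C] [T1Space X] [T1Space Y]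
    (S : Scheme X π) (T : Scheme Y π) (hπ : IsCylinderSystem π) : Nonempty (X ≃ₜ Y) :=
  ⟨{ toFun := S.transfer T
     invFun := T.transfer S
     left_inv := S.transfer_transfer T
     right_inv := T.transfer_transfer S
     continuous_toFun := S.continuous_transfer T hπ
     continuous_invFun := T.continuous_transfer S hπ }⟩

end Scheme

end Scheme


section Exhaustion

variable {C X Y : Type*} [TopologicalSpace C] [TopologicalSpace X] [TopologicalSpace Y]
  {π : ℕ → C → C}

/-- `X` is a countable union of pieces such that, inside every nonempty clopen set `U`, the trace
of any piece is contained in a copy of `C` which lies in `U`, is a retract of `X` and has empty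
interior. -/
def IsExhausted (C X : Type*) [TopologicalSpace C] [TopologicalSpace X] : Prop :=
  ∃ A : ℕ → Set X, (∀ x, ∃ n, x ∈ A n) ∧ ∀ n U, IsClopen U → U.Nonempty →
    ∃ (e : C → X) (r : X → C), Continuous e ∧ Continuous r ∧ (∀ c, r (e c) = c) ∧
      (∀ c, e c ∈ U) ∧ A n ∩ U ⊆ range e ∧ interior (range e) = ∅

/-- Clopen neighbourhoods of a nowhere dense retract can be shrunk, so that the points left out
are retracted into all cells of the `k`-th partition. -/
theorem exists_shrinking_step {X : Type*} [MetricSpace X] [CompactSpace C] (h : ZeroDim X)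
    (hπ : IsCylinderSystem π) {e : C → X} {r : X → C} (he : Continuous e) (hr : Continuous r)
    (hre : ∀ c, r (e c) = c) (hempty : interior (range e) = ∅) {N : Set X} (hN : IsClopen N)
    (heN : range e ⊆ N) (k : ℕ) :
    ∃ N', IsClopen N' ∧ range e ⊆ N' ∧ N' ⊆ N ∧ (∀ x ∈ N', dist x (e (r x)) < 1 / (k + 1)) ∧
      ∀ d, π k d = d → ∃ x ∈ N, x ∉ N' ∧ π k (r x) = d := by
  have key : ∀ d, ∃ x, π k d = d → x ∈ N ∧ π k (r x) = d ∧ x ∉ range e := by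
    intro d
    by_cases hd : π k d = d
    · by_contra! hcon
      have hopen : IsOpen (N ∩ r ⁻¹' {c | π k c = d}) :=
        hN.isOpen.inter ((hπ.isClopen k d).isOpen.preimage hr)
      have hsub : N ∩ r ⁻¹' {c | π k c = d} ⊆ range e := fun x hx => (hcon x).2 hx.1 hx.2
      have hmem : e d ∈ N ∩ r ⁻¹' {c | π k c = d} :=
        ⟨heN (mem_range_self d), by simpa [hre] using hd⟩
      have := interior_maximal hsub hopen hmem
      rwa [hempty] at this
    · exact ⟨e d, fun h => absurd h hd⟩
  choose x hx using key
  have hfin : (x '' {d | π k d = d}).Finite :=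
    ((hπ.finite_range k).subset fun d hd => ⟨d, hd⟩).image x
  have hdist : IsOpen {y | dist y (e (r y)) < 1 / ((k : ℝ) + 1)} :=
    isOpen_lt (continuous_id.dist (he.comp hr)) continuous_const
  obtain ⟨N', h1, h2, h3⟩ := h.exists_clopen_between (isCompact_range he)
    ((hN.isOpen.inter hdist).inter hfin.isClosed.isOpen_compl) (K := range e) (by
      rintro _ ⟨c, rfl⟩
      refine ⟨⟨heN (mem_range_self c), ?_⟩, ?_⟩
      · simp only [mem_ofPred_eq, hre, dist_self]
        positivity
      · rintro ⟨d, hd, hdc⟩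
        exact (hx d hd).2.2 (hdc ▸ mem_range_self c))
  refine ⟨N', h1, h2, fun y hy => (h3 hy).1.1, fun y hy => (h3 hy).1.2, fun d hd => ?_⟩
  exact ⟨x d, (hx d hd).1, fun hmem => (h3 hmem).2 ⟨d, hd, rfl⟩, (hx d hd).2.1⟩

/-- Iterating `exists_shrinking_step` gives clopen sets decreasing from `U` to the nowhere dense
retract, whose successive differences meet all the cells. -/
theorem exists_shrinking_sequence [MetrizableSpace X] [CompactSpace C] (h : ZeroDim X)
    (hπ : IsCylinderSystem π) {e : C → X} {r : X → C} (he : Continuous e) (hr : Continuous r)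
    (hre : ∀ c, r (e c) = c) (hempty : interior (range e) = ∅) {U : Set X} (hU : IsClopen U)
    (heU : ∀ c, e c ∈ U) :
    ∃ N : ℕ → Set X, N 0 = U ∧ Antitone N ∧ (∀ k, IsClopen (N k)) ∧ (∀ c k, e c ∈ N k) ∧
      (∀ c, ∀ V ∈ 𝓝 (e c), ∃ k, ∀ x ∈ N k, π k (r x) = π k c → x ∈ V) ∧
      ∀ k d, π k d = d → ∃ x ∈ N k, x ∉ N (k + 1) ∧ π k (r x) = d := by
  let := metrizableSpaceMetric X
  have step : ∀ (k : ℕ) (N : {N : Set X // IsClopen N ∧ range e ⊆ N}),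
      ∃ N' : {N : Set X // IsClopen N ∧ range e ⊆ N}, N'.1 ⊆ N.1 ∧
        (∀ x ∈ N'.1, dist x (e (r x)) < 1 / (k + 1)) ∧
        ∀ d, π k d = d → ∃ x ∈ N.1, x ∉ N'.1 ∧ π k (r x) = d := by
    rintro k ⟨N, hN, heN⟩
    obtain ⟨N', h1, h2, h3⟩ := exists_shrinking_step h hπ he hr hre hempty hN heN k
    exact ⟨⟨N', h1, h2⟩, h3⟩
  choose f hf using step
  let N : ℕ → {N : Set X // IsClopen N ∧ range e ⊆ N} := fun k =>
    Nat.rec ⟨U, hU, range_subset_iff.2 heU⟩ (fun k N => f k N) k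
  have hN : ∀ k, N (k + 1) = f k (N k) := fun k => rfl
  have hanti : Antitone fun k => (N k).1 := antitone_nat_of_succ_le fun k => by
    simp only [hN]; exact (hf k (N k)).1
  refine ⟨fun k => (N k).1, rfl, hanti, fun k => (N k).2.1,
    fun c k => (N k).2.2 (mem_range_self c), fun c V hV => ?_, fun k d hd => ?_⟩
  · obtain ⟨ε, hε, hεV⟩ := Metric.mem_nhds_iff.1 hV
    obtain ⟨k0, hk0⟩ := hπ.basis c _
      (he.continuousAt.preimage_mem_nhds (Metric.ball_mem_nhds (e c) (half_pos hε)))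
    obtain ⟨k1, hk1⟩ := exists_nat_one_div_lt (half_pos hε)
    refine ⟨max k0 (k1 + 1), fun x hx hxc => hεV ?_⟩
    have h1 : x ∈ (N (k1 + 1)).1 := hanti (le_max_right _ _) hx
    have h2 : dist x (e (r x)) < 1 / ((k1 : ℝ) + 1) := (hf k1 (N k1)).2.1 x h1
    have h3 : dist (e (r x)) (e c) < ε / 2 := hk0 _ (hπ.mono (le_max_left _ _) hxc)
    rw [Metric.mem_ball]
    linarith [dist_triangle x (e (r x)) (e c)]
  · exact (hf k (N k)).2.2 d hd

/-- The scheme is built by recursion on words: the copy of `C` chosen inside the nonempty clopen set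
`Q s` covers the trace of the piece whose index is the length of `s`, so every point is eventually
covered. -/
theorem IsExhausted.exists_scheme [MetrizableSpace X] [Nonempty X] [CompactSpace C] [Nonempty C]
    (hX : IsExhausted C X) (h : ZeroDim X) (hπ : IsCylinderSystem π) :
    Nonempty (Scheme X π) := by
  obtain ⟨A, hA, hAU⟩ := hX
  have key : ∀ n U, ∃ (e : C → X) (r : X → C) (N : ℕ → Set X), IsClopen U → U.Nonempty →
      Continuous r ∧ (∀ c, r (e c) = c) ∧ A n ∩ U ⊆ range e ∧ N 0 = U ∧ Antitone N ∧
      (∀ k, IsClopen (N k)) ∧ (∀ c k, e c ∈ N k) ∧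
      (∀ c, ∀ V ∈ 𝓝 (e c), ∃ k, ∀ x ∈ N k, π k (r x) = π k c → x ∈ V) ∧
      ∀ k d, π k d = d → ∃ x ∈ N k, x ∉ N (k + 1) ∧ π k (r x) = d := by
    intro n U
    by_cases hU : IsClopen U ∧ U.Nonempty
    · obtain ⟨e, r, h1, h2, h3, h4, h5, h6⟩ := hAU n U hU.1 hU.2
      obtain ⟨N, hN⟩ := exists_shrinking_sequence h hπ h1 h2 h3 h6 hU.1 h4
      exact ⟨e, r, N, fun _ _ => ⟨h2, h3, h5, hN⟩⟩
    · exact ⟨fun _ => Classical.arbitrary X, fun _ => Classical.arbitrary C, fun _ => ∅,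
        fun h1 h2 => absurd ⟨h1, h2⟩ hU⟩
  choose e r N H using key
  let Q : List (ℕ × C) → Set X := fun s => List.rec univ (fun p s q =>
    {x | x ∈ N s.length q p.1 ∧ x ∉ N s.length q (p.1 + 1) ∧ π p.1 (r s.length q x) = p.2}) s
  have hQ : ∀ s, Admissible π s → IsClopen (Q s) ∧ (Q s).Nonempty := by
    intro s
    induction s with
    | nil => exact fun _ => ⟨isClopen_univ, univ_nonempty⟩
    | cons p s ih =>
      intro hs
      obtain ⟨hc, hne⟩ := ih fun q hq => hs q (List.mem_cons_of_mem _ hq)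
      obtain ⟨hr, -, -, -, -, hN, -, -, hcell⟩ := H s.length (Q s) hc hne
      refine ⟨?_, ?_⟩
      · exact (hN p.1).inter ((hN (p.1 + 1)).compl.inter ((hπ.isClopen p.1 p.2).preimage hr))
      · exact hcell p.1 p.2 (hs p List.mem_cons_self)
  have H' := fun s hs => H (List.length s) (Q s) (hQ s hs).1 (hQ s hs).2
  refine ⟨{ Q := Q, e := fun s => e s.length (Q s), r := fun s => r s.length (Q s),
            N := fun s => N s.length (Q s), Q_nil := rfl, Q_cons := fun _ _ _ => rfl,
            N_zero := fun {s} hs => (H' s hs).2.2.2.1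
            N_anti := fun {s} hs => (H' s hs).2.2.2.2.1
            r_e := fun {s} hs => (H' s hs).2.1
            e_mem := fun {s} hs => (H' s hs).2.2.2.2.2.2.1
            isOpen := fun {s} hs k c => ((H' s hs).2.2.2.2.2.1 k).isOpen.inter
              ((hπ.isClopen k c).isOpen.preimage (H' s hs).1)
            small := fun {s} hs => (H' s hs).2.2.2.2.2.2.2.1
            exhaust := fun x => ?_ }⟩
  by_contra! hcon
  -- A point outside all copies lies in sets `Q s` with words `s` of every length.
  have hall : ∀ m, ∃ s, Admissible π s ∧ s.length = m ∧ x ∈ Q s := by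
    intro m
    induction m with
    | zero => exact ⟨[], by simp [Admissible], rfl, mem_univ x⟩
    | succ m ih =>
      obtain ⟨s, hs, hm, hx⟩ := ih
      obtain ⟨-, -, -, h0, hanti, -, -, hsmall, -⟩ := H' s hs
      obtain ⟨k, hk⟩ : ∃ k, x ∉ N s.length (Q s) k := by
        by_contra! hmem
        obtain ⟨k, hk⟩ := hsmall (r s.length (Q s) x) {x}ᶜ
          (isOpen_compl_singleton.mem_nhds (hcon s hs _))
        exact hk x (hmem k) rfl rfl
      classical
      have hex : ∃ k, x ∉ N s.length (Q s) k := ⟨k, hk⟩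
      have hpos : Nat.find hex ≠ 0 := fun h00 => by
        have := Nat.find_spec hex
        rw [h00, h0] at this
        exact this hx
      obtain ⟨j, hj⟩ := Nat.exists_eq_succ_of_ne_zero hpos
      refine ⟨(j, π j (r s.length (Q s) x)) :: s, ?_, by simp [hm], ?_, ?_, rfl⟩
      · rintro p (_ | ⟨_, hp⟩)
        · exact hπ.comp _ le_rfl
        · exact hs p hp
      · exact by_contra fun h => Nat.find_min hex (by omega) h
      · have := Nat.find_spec hex
        rwa [hj] at this
  obtain ⟨n, hn⟩ := hA x
  obtain ⟨s, hs, hsn, hx⟩ := hall n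
  obtain ⟨c, hc⟩ := (H' s hs).2.2.1 ⟨hsn ▸ hn, hx⟩
  exact hcon s hs c hc

/-- Any two spaces exhausted by nowhere dense copies of `C` are homeomorphic. -/
theorem IsExhausted.homeomorph [MetrizableSpace X] [Nonempty X] [MetrizableSpace Y] [Nonempty Y]
    [CompactSpace C] [Nonempty C] (hX : IsExhausted C X) (h : ZeroDim X) (hY : IsExhausted C Y)
    (h' : ZeroDim Y) (hπ : IsCylinderSystem π) : Nonempty (X ≃ₜ Y) := by
  obtain ⟨S⟩ := hX.exists_scheme h hπ
  obtain ⟨T⟩ := hY.exists_scheme h' hπ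
  exact S.homeomorph T hπ

end Exhaustion


/-! ### Topological characterizations of `ℚ` and `ℚ × 2^ω` -/

section Characterizations

variable {X : Type*} [TopologicalSpace X] [MetrizableSpace X]

theorem isCylinderSystem_unit : IsCylinderSystem (C := Unit) fun _ c => c where
  finite_range _ := toFinite _
  isClopen _ _ := isClopen_discrete _
  comp _ _ := rfl
  basis _ _ hU := ⟨0, fun _ _ => mem_of_mem_nhds hU⟩

theorem isExhausted_unit {X : Type*} [TopologicalSpace X] [T1Space X] [Countable X] [Nonempty X]
    [PerfectSpace X] : IsExhausted Unit X := by
  obtain ⟨f, hf⟩ := exists_surjective_nat X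
  have aux : ∀ x : X, interior (range fun _ : Unit => x) = ∅ := fun x => by
    rw [range_const, interior_singleton]
  refine ⟨fun n => {f n}, fun x => (hf x).imp fun n h => h.symm, fun n U hU hne => ?_⟩
  by_cases hn : f n ∈ U
  · exact ⟨fun _ => f n, fun _ => (), continuous_const, continuous_const, fun _ => rfl,
      fun _ => hn, fun x hx => ⟨(), hx.1.symm⟩, aux _⟩
  · obtain ⟨u, hu⟩ := hne
    exact ⟨fun _ => u, fun _ => (), continuous_const, continuous_const, fun _ => rfl,
      fun _ => hu, fun x hx => absurd (hx.1 ▸ hx.2) hn, aux _⟩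

instance perfectSpace_rat : PerfectSpace ℚ :=
  perfectSpace_iff_forall_not_isolated.2 fun _ => inferInstance

/-- Sierpiński's characterization of the rationals. -/
theorem homeomorph_rat [Countable X] [Nonempty X] [PerfectSpace X] : Nonempty (X ≃ₜ ℚ) :=
  isExhausted_unit.homeomorph zeroDim_of_countable isExhausted_unit zeroDim_of_countable
    isCylinderSystem_unit

/-- The partitions of `2^ω` according to the first `k` coordinates; the chosen point of each cell
vanishes at all other coordinates. -/
def truncation (k : ℕ) (c : ℕ → Bool) (i : ℕ) : Bool := if i < k then c i else false

theorem truncation_eq_iff {k : ℕ} {c d : ℕ → Bool} :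
    truncation k c = truncation k d ↔ ∀ i < k, c i = d i := by
  simp only [funext_iff, truncation]
  refine forall_congr' fun i => ?_
  by_cases h : i < k <;> simp [h]

theorem exists_truncation_subset {c : ℕ → Bool} {U : Set (ℕ → Bool)} (hU : U ∈ 𝓝 c) :
    ∃ k, ∀ d, (∀ i < k, d i = c i) → d ∈ U := by
  obtain ⟨V, hVU, hV, hcV⟩ := mem_nhds_iff.1 hU
  obtain ⟨I, u, h1, h2⟩ := isOpen_pi_iff.1 hV c hcV
  refine ⟨I.sup id + 1, fun d hd => hVU (h2 fun i hi => ?_)⟩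
  rw [hd i (Nat.lt_succ_of_le (Finset.le_sup (f := id) hi))]
  exact (h1 i hi).2

theorem isCylinderSystem_truncation : IsCylinderSystem truncation := by
  let G : ∀ k, (Fin k → Bool) → ℕ → Bool := fun k g i => if h : i < k then g ⟨i, h⟩ else false
  have hG : ∀ k c, truncation k c = G k fun i => c i := by
    intro k c
    funext i
    by_cases h : i < k <;> simp [truncation, G, h]
  refine ⟨fun k => ?_, fun k c => ?_, fun {j k} c hjk => ?_, fun c U hU => ?_⟩
  · refine (finite_range (G k)).subset ?_
    rintro _ ⟨c, rfl⟩
    exact ⟨fun i => c i, (hG k c).symm⟩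
  · have hcont : Continuous fun d : ℕ → Bool => fun i : Fin k => d i := by fun_prop
    have := (isClopen_discrete {g | G k g = c}).preimage hcont
    simpa only [hG, preimage_ofPred_eq] using this
  · refine truncation_eq_iff.2 fun i hi => ?_
    simp [truncation, hi.trans_le hjk]
  · obtain ⟨k, hk⟩ := exists_truncation_subset hU
    exact ⟨k, fun d hd => hk d (truncation_eq_iff.1 hd)⟩

instance uncountable_cantor : Uncountable (ℕ → Bool) := by
  rw [← Cardinal.aleph0_lt_mk_iff]
  simpa using Cardinal.aleph0_lt_continuum

theorem not_countable_of_isOpen_cantor {U : Set (ℕ → Bool)} (hU : IsOpen U) (hne : U.Nonempty) :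
    ¬ U.Countable := by
  obtain ⟨c, hc⟩ := hne
  obtain ⟨k, hk⟩ := exists_truncation_subset (hU.mem_nhds hc)
  intro hcount
  let f : (ℕ → Bool) → U := fun d =>
    ⟨fun i => if i < k then c i else d (i - k), hk _ fun i hi => by simp [hi]⟩
  have hf : Injective f := fun d d' h => by
    funext i
    have := congrFun (congrArg Subtype.val h) (k + i)
    simpa [f] using this
  have := hcount.to_subtype
  exact (not_countable_iff.2 uncountable_cantor) hf.countable

/-- If every neighbourhood of `s` is uncountable, then `s` lies on a compact set without isolated
points: a sequence of such sets converging to `s`, together with `s`. -/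
theorem exists_compact_preperfect_mem [SigmaCompactSpace X] (h : ZeroDim X) (s : X)
    (hs : ∀ U, IsClopen U → s ∈ U → ¬ U.Countable) :
    ∃ L, IsCompact L ∧ Preperfect L ∧ s ∈ L := by
  let := metrizableSpaceMetric X
  have key : ∀ j : ℕ, ∃ D : Set X, IsCompact D ∧ Preperfect D ∧ D.Nonempty ∧
      D ⊆ Metric.ball s (1 / (j + 1)) := by
    intro j
    obtain ⟨B, hB, hsB, hBs⟩ := h.exists_clopen (x := s)
      (Metric.mem_ball_self (ε := 1 / ((j : ℝ) + 1)) (by positivity)) Metric.isOpen_ball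
    obtain ⟨n, hn⟩ : ∃ n, ¬ (compactCovering X n ∩ B).Countable := by
      by_contra! hcon
      have := countable_iUnion hcon
      rw [← iUnion_inter, iUnion_compactCovering, univ_inter] at this
      exact hs B hB hsB this
    have hc : IsCompact (compactCovering X n ∩ B) :=
      (isCompact_compactCovering X n).inter_right hB.isClosed
    obtain ⟨D, hD, hne, hDs⟩ := exists_perfect_nonempty_of_isClosed_of_not_countable hc.isClosed hn
    exact ⟨D, hc.of_isClosed_subset hD.closed hDs, hD.acc, hne,
      (hDs.trans inter_subset_right).trans hBs⟩
  choose D hDc hDp hDne hDs using key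
  have hnear : ∀ O ∈ 𝓝 s, ∃ J, ∀ j, J ≤ j → D j ⊆ O := by
    intro O hO
    obtain ⟨ε, hε, hεO⟩ := Metric.mem_nhds_iff.1 hO
    obtain ⟨J, hJ⟩ := exists_nat_one_div_lt hε
    refine ⟨J, fun j hj => (hDs j).trans ((Metric.ball_subset_ball ?_).trans hεO)⟩
    exact (Nat.one_div_le_one_div hj).trans hJ.le
  refine ⟨insert s (⋃ j, D j), ?_, ?_, mem_insert _ _⟩
  · refine isCompact_iff_ultrafilter_le_nhds.2 fun f hf => ?_
    by_cases hfs : ↑f ≤ 𝓝 s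
    · exact ⟨s, mem_insert _ _, hfs⟩
    · obtain ⟨O, hO, hOf⟩ := Filter.not_le.1 hfs
      obtain ⟨J, hJ⟩ := hnear O hO
      have hcomp : IsCompact (⋃ j ∈ Finset.range J, D j) :=
        (Finset.range J).isCompact_biUnion fun j _ => hDc j
      have hmem : (⋃ j ∈ Finset.range J, D j) ∈ f := by
        have h1 : Oᶜ ∈ f := Ultrafilter.compl_mem_iff_notMem.2 hOf
        have h2 : insert s (⋃ j, D j) ∈ f := Filter.le_principal_iff.1 hf
        refine Filter.mem_of_superset (Filter.inter_mem h1 h2) ?_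
        rintro x ⟨hxO, rfl | hx⟩
        · exact absurd (mem_of_mem_nhds hO) hxO
        · obtain ⟨j, hj⟩ := mem_iUnion.1 hx
          refine mem_biUnion (x := j) (Finset.mem_coe.2 (Finset.mem_range.2 ?_)) hj
          by_contra! hJj
          exact hxO (hJ j hJj hj)
      obtain ⟨x, hx, hfx⟩ := isCompact_iff_ultrafilter_le_nhds.1 hcomp f
        (Filter.le_principal_iff.2 hmem)
      obtain ⟨j, -, hj⟩ := mem_iUnion₂.1 hx
      exact ⟨x, mem_insert_of_mem _ (mem_iUnion.2 ⟨j, hj⟩), hfx⟩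
  · refine preperfect_iff_nhds.2 ?_
    have hD : ∀ j, ∀ x ∈ D j, ∀ O ∈ 𝓝 x, ∃ y ∈ O ∩ insert s (⋃ j, D j), y ≠ x := by
      intro j x hx O hO
      obtain ⟨y, ⟨hyO, hy⟩, hyx⟩ := preperfect_iff_nhds.1 (hDp j) x hx O hO
      exact ⟨y, ⟨hyO, mem_insert_of_mem _ (mem_iUnion.2 ⟨j, hy⟩)⟩, hyx⟩
    rintro x (rfl | hx) O hO
    · obtain ⟨J, hJ⟩ := hnear O hO
      obtain ⟨y, hy⟩ := hDne J
      by_cases hyx : y = x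
      · exact hD J x (hyx ▸ hy) O hO
      · exact ⟨y, ⟨hJ J le_rfl hy, mem_insert_of_mem _ (mem_iUnion.2 ⟨J, hy⟩)⟩, hyx⟩
    · obtain ⟨j, hj⟩ := mem_iUnion.1 hx
      exact hD j x hj O hO

/-- Each set of a compact exhaustion is a perfect set together with countably many points, and
`exists_compact_preperfect_mem` provides a crowded compact set through each of these points. -/
theorem exists_compact_preperfect_cover [SigmaCompactSpace X] [Nonempty X] (h : ZeroDim X)
    (hX : ∀ U : Set X, IsClopen U → U.Nonempty → ¬ U.Countable) :
    ∃ A : ℕ → Set X, (∀ n, IsCompact (A n) ∧ Preperfect (A n)) ∧ ∀ x, ∃ n, x ∈ A n := by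
  let := metrizableSpaceMetric X
  choose L hLc hLp hL using fun s => exists_compact_preperfect_mem h s
    fun U hU hs => hX U hU ⟨s, hs⟩
  choose V D hV hD hVD using fun n =>
    exists_countable_union_perfect_of_isClosed (isCompact_compactCovering X n).isClosed
  have hcount : (range D ∪ L '' ⋃ n, V n).Countable :=
    (countable_range D).union ((countable_iUnion hV).image L)
  obtain ⟨A, hA⟩ := hcount.exists_eq_range ⟨D 0, Or.inl (mem_range_self 0)⟩
  refine ⟨A, fun n => ?_, fun x => ?_⟩
  · rcases hA ▸ mem_range_self n with ⟨m, hm⟩ | ⟨s, -, hs⟩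
    · rw [← hm]
      exact ⟨(isCompact_compactCovering X m).of_isClosed_subset (hD m).closed
        (by rw [hVD m]; exact subset_union_right), (hD m).acc⟩
    · rw [← hs]
      exact ⟨hLc s, hLp s⟩
  · have hx : x ∈ ⋃ n, compactCovering X n := by
      rw [iUnion_compactCovering]; exact mem_univ x
    obtain ⟨n, hn⟩ := mem_iUnion.1 hx
    rw [hVD n] at hn
    rcases hn with hn | hn
    · obtain ⟨m, hm⟩ : L x ∈ range A :=
        hA ▸ Or.inr (mem_image_of_mem L (mem_iUnion.2 ⟨n, hn⟩))
      exact ⟨m, hm ▸ hL x⟩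
    · obtain ⟨m, hm⟩ : D n ∈ range A := hA ▸ Or.inl (mem_range_self n)
      exact ⟨m, hm ▸ hn⟩

/-- A copy of `2^ω` in a zero-dimensional space is a retract: each of its coordinates extends to
the indicator function of a clopen set. -/
theorem exists_retraction_cantor (h : ZeroDim X) {K : Set X} (hK : IsCompact K)
    (φ : K ≃ₜ (ℕ → Bool)) : ∃ r : X → ℕ → Bool, Continuous r ∧ ∀ c, r (φ.symm c) = c := by
  have := isCompact_iff_compactSpace.1 hK
  have hcoord : ∀ i : ℕ, Continuous fun x : K => φ x i := fun i =>
    (continuous_apply i).comp φ.continuous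
  have key : ∀ i : ℕ, ∃ W : Set X, IsClopen W ∧ ∀ x : K, (x : X) ∈ W ↔ φ x i = true := by
    intro i
    have hc : ∀ b : Bool, IsCompact (Subtype.val '' {x : K | φ x i = b} : Set X) := fun b =>
      ((isClosed_discrete {b}).preimage (hcoord i)).isCompact.image continuous_subtype_val
    obtain ⟨W, h1, h2, h3⟩ := h.exists_clopen_between (hc true) (hc false).isClosed.isOpen_compl
      (by
        rintro _ ⟨x, hx, rfl⟩ ⟨y, hy, hyx⟩
        obtain rfl := Subtype.val_injective hyx
        exact Bool.noConfusion (hx.symm.trans hy))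
    refine ⟨W, h1, fun x => ⟨fun hx => ?_, fun hx => h2 ⟨x, hx, rfl⟩⟩⟩
    by_contra hb
    exact h3 hx ⟨x, by simpa using hb, rfl⟩
  choose W hW hWK using key
  refine ⟨fun x i => (W i).boolIndicator x,
    continuous_pi fun i => (continuous_boolIndicator_iff_isClopen _).2 (hW i), fun c => ?_⟩
  funext i
  have := hWK i (φ.symm c)
  rw [φ.apply_symm_apply, Set.mem_iff_boolIndicator] at this
  exact Bool.eq_iff_iff.2 this

/-- In a zero-dimensional σ-compact space which is nowhere countable and nowhere compact, the crowded
compact sets covering the space have traces on clopen sets which are empty or nowhere dense copies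
of `2^ω`. -/
theorem isExhausted_cantor [SigmaCompactSpace X] [Nonempty X] (h : ZeroDim X)
    (hX : ∀ U : Set X, IsClopen U → U.Nonempty → ¬ U.Countable)
    (hX' : ∀ U : Set X, IsClopen U → U.Nonempty → ¬ IsCompact U) :
    IsExhausted (ℕ → Bool) X := by
  obtain ⟨A, hA, hcov⟩ := exists_compact_preperfect_cover h hX
  refine ⟨A, hcov, fun n U hU hne => ?_⟩
  obtain ⟨m, hmne, hnm⟩ : ∃ m, (U ∩ A m).Nonempty ∧ A n ∩ U ⊆ U ∩ A m := by
    by_cases hn : (U ∩ A n).Nonempty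
    · exact ⟨n, hn, (inter_comm _ _).subset⟩
    · obtain ⟨x, hx⟩ := hne
      obtain ⟨m, hm⟩ := hcov x
      exact ⟨m, ⟨x, hx, hm⟩, fun y hy => absurd ⟨y, hy.2, hy.1⟩ hn⟩
  have hK : IsCompact (U ∩ A m) := (hA m).1.inter_left hU.isClosed
  obtain ⟨φ⟩ := h.homeomorph_cantor_of_preperfect hK ((hA m).2.open_inter hU.isOpen) hmne
  obtain ⟨r, hr, hre⟩ := exists_retraction_cantor h hK φ
  have hrange : (range fun c => (φ.symm c : X)) = U ∩ A m := by
    refine Subset.antisymm (range_subset_iff.2 fun c => (φ.symm c).2) fun x hx => ?_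
    exact ⟨φ ⟨x, hx⟩, by simp⟩
  refine ⟨fun c => φ.symm c, r, continuous_subtype_val.comp φ.symm.continuous, hr, hre,
    fun c => (φ.symm c).2.1, hrange.symm ▸ hnm, ?_⟩
  rw [hrange]
  by_contra hne'
  obtain ⟨x, hx⟩ := nonempty_iff_ne_empty.2 hne'
  obtain ⟨V, hV, hxV, hVK⟩ := h.exists_clopen hx isOpen_interior
  exact hX' V hV ⟨x, hxV⟩ (hK.of_isClosed_subset hV.isClosed (hVK.trans interior_subset))

theorem zeroDim_rat_prod_cantor : ZeroDim (ℚ × (ℕ → Bool)) :=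
  zeroDim_of_countable.prod zeroDim_of_compact

instance sigmaCompactSpace_rat_prod_cantor : SigmaCompactSpace (ℚ × (ℕ → Bool)) := by
  refine SigmaCompactSpace.of_countable (range fun q : ℚ => {q} ×ˢ univ) (countable_range _) ?_ ?_
  · rintro _ ⟨q, rfl⟩
    exact isCompact_singleton.prod isCompact_univ
  · exact eq_univ_of_forall fun p => ⟨_, mem_range_self p.1, rfl, mem_univ _⟩

/-- The product `ℚ × 2^ω` is the only nonempty zero-dimensional σ-compact metrizable space which is
nowhere countable and nowhere compact. -/
theorem homeomorph_rat_prod_cantor [SigmaCompactSpace X] [Nonempty X] (h : ZeroDim X)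
    (hX : ∀ U : Set X, IsClopen U → U.Nonempty → ¬ U.Countable)
    (hX' : ∀ U : Set X, IsClopen U → U.Nonempty → ¬ IsCompact U) :
    Nonempty (X ≃ₜ ℚ × (ℕ → Bool)) := by
  refine (isExhausted_cantor h hX hX').homeomorph h
    (isExhausted_cantor zeroDim_rat_prod_cantor ?_ ?_) zeroDim_rat_prod_cantor
    isCylinderSystem_truncation
  · rintro U hU ⟨⟨q, c⟩, hqc⟩ hcount
    have hcont : Continuous fun d : ℕ → Bool => (q, d) := by fun_prop
    exact not_countable_of_isOpen_cantor (hU.isOpen.preimage hcont) ⟨c, hqc⟩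
      (hcount.preimage (Prod.mk_right_injective q))
  · rintro U hU ⟨p, hp⟩ hc
    have h1 := Rat.interior_compact_eq_empty (hc.image continuous_fst)
    rw [(isOpenMap_fst U hU.isOpen).interior_eq] at h1
    exact (h1 ▸ mem_image_of_mem Prod.fst hp : p.1 ∈ (∅ : Set ℚ))

end Characterizations


/-! ### Transfinite removal of open pieces -/

section Derivation

/-- The transfinite iteration of an operation `next` on sets, starting from the empty set and
taking unions at limit stages. -/
noncomputable def transfiniteUnion {X : Type*} (next : Set X → Set X) (α : Ordinal) : Set X :=
  ⋃ β : Iio α, next (transfiniteUnion next β)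
termination_by α
decreasing_by exact β.2

theorem mem_transfiniteUnion {X : Type*} {next : Set X → Set X} {α : Ordinal} {x : X} :
    x ∈ transfiniteUnion next α ↔ ∃ β < α, x ∈ next (transfiniteUnion next β) := by
  rw [transfiniteUnion]
  simp

/-- A Cantor–Bendixson type decomposition: relatively open pieces with the property `P` are removed
from `X` one after another, until the remaining closed set `F j₀` has no such pieces. Countably
many steps suffice because the growing removed parts are open. -/
theorem exists_decomposition.{u} {X : Type u} [TopologicalSpace X] [SecondCountableTopology X]
    (P : Set X → Prop) :
    ∃ (J : Type (u + 1)) (_ : Countable J) (F : J → Set X) (j₀ : J),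
      (X ≋ Σ j, F j) ∧ (∀ j, j ≠ j₀ → P (F j)) ∧ IsClosed (F j₀) ∧
      ∀ V, IsOpen V → (V ∩ F j₀).Nonempty → ¬ P (V ∩ F j₀) := by
  have hnext : ∀ S : Set X, ∃ T, S ⊆ T ∧ (IsOpen S → IsOpen T) ∧ (T ≠ S → P (T \ S)) ∧
      (T = S → ∀ V, IsOpen V → (V ∩ Sᶜ).Nonempty → ¬ P (V ∩ Sᶜ)) := by
    intro S
    by_cases hS : ∃ V, IsOpen V ∧ (V ∩ Sᶜ).Nonempty ∧ P (V ∩ Sᶜ)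
    · obtain ⟨V, hV, ⟨x, hxV, hxS⟩, hP⟩ := hS
      refine ⟨S ∪ V, subset_union_left, fun h => h.union hV, fun _ => ?_, fun h => ?_⟩
      · rwa [union_sdiff_left]
      · exact absurd (h ▸ Or.inr hxV) hxS
    · push Not at hS
      exact ⟨S, subset_rfl, id, fun h => absurd rfl h, fun _ => hS⟩
  choose next hsub hopen hP hfinal using hnext
  let W : Ordinal.{u} → Set X := transfiniteUnion next
  have hW : ∀ {α x}, x ∈ W α ↔ ∃ β < α, x ∈ next (W β) := mem_transfiniteUnion
  have hWopen : ∀ α, IsOpen (W α) := by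
    intro α
    induction α using WellFoundedLT.induction with
    | ind α ih =>
      have : W α = ⋃ β, ⋃ (_ : β < α), next (W β) := by
        ext x
        simp [hW]
      rw [this]
      exact isOpen_iUnion fun β => isOpen_iUnion fun hβ => hopen _ (ih β hβ)
  have hnextW : ∀ {β α}, β < α → next (W β) ⊆ W α := fun hβ x hx => hW.2 ⟨_, hβ, hx⟩
  have hWnext : ∀ {β α}, β ≤ α → next (W β) ⊆ next (W α) := by
    intro β α h
    rcases h.eq_or_lt with rfl | h
    · exact subset_rfl
    · exact (hnextW h).trans (hsub _)
  obtain ⟨α, hα, hmin⟩ : ∃ α, next (W α) = W α ∧ ∀ β < α, next (W β) ≠ W β := by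
    have hex : {α | next (W α) = W α}.Nonempty := by
      by_contra hne
      refine not_injective_of_ordinal W (Injective.of_lt_imp_ne fun β α hβ heq => hne ⟨β, ?_⟩)
      exact ((hnextW hβ).trans heq.symm.subset).antisymm (hsub _)
    exact ⟨sInf {α | next (W α) = W α}, csInf_mem hex, fun β hβ h => notMem_of_lt_csInf' hβ h⟩
  -- The stage `sInf (B x)` is that at which `x` is removed, or `α` if `x` is never removed.
  let B : X → Set Ordinal.{u} := fun x => {β | x ∈ next (W β) ∨ β = α}
  have hB : ∀ x, sInf (B x) ∈ B x := fun x => csInf_mem ⟨α, Or.inr rfl⟩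
  have hBα : ∀ x, sInf (B x) ≤ α := fun x => csInf_le' (Or.inr rfl)
  have hle : ∀ {x β}, β < α → (sInf (B x) ≤ β ↔ x ∈ next (W β)) := by
    intro x β hβ
    refine ⟨fun h => ?_, fun h => csInf_le' (Or.inl h)⟩
    rcases hB x with h1 | h1
    · exact hWnext h h1
    · exact absurd h1 (h.trans_lt hβ).ne
  let ρ : X → Iic α := fun x => ⟨sInf (B x), hBα x⟩
  have hlt : ∀ {x β}, β ≤ α → (sInf (B x) < β ↔ x ∈ W β) := by
    intro x β hβ
    rw [hW]
    refine ⟨fun h => ⟨_, h, (hle (h.trans_le hβ)).1 le_rfl⟩, ?_⟩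
    rintro ⟨γ, hγ, hx⟩
    exact ((hle (hγ.trans_le hβ)).2 hx).trans_lt hγ
  have hfib : ∀ β (hβ : β < α), ρ ⁻¹' {⟨β, hβ.le⟩} = next (W β) \ W β := by
    intro β hβ
    ext x
    rw [mem_sdiff, ← hle hβ, ← hlt hβ.le, not_lt, ← le_antisymm_iff]
    exact Subtype.ext_iff
  have hfibα : ρ ⁻¹' {⟨α, self_mem_Iic⟩} = (W α)ᶜ := by
    ext x
    rw [mem_compl_iff, ← hlt le_rfl, not_lt, (hBα x).ge_iff_eq]
    exact Subtype.ext_iff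
  refine ⟨Iic α, ?_, fun j => ρ ⁻¹' {j}, ⟨α, self_mem_Iic⟩, WeaklyHomeomorphic.sigma_fibers ρ ?_,
    ?_, ?_, ?_⟩
  · rw [← Iio_insert]
    refine Countable.to_subtype (Countable.insert _ ?_)
    obtain ⟨b, hbc, -, hb⟩ := TopologicalSpace.exists_countable_basis X
    -- Different stages below `α` first absorb different members of a countable base.
    have key : ∀ β : Iio α, ∃ O : b, (O : Set X) ⊆ next (W β) ∧ ¬ (O : Set X) ⊆ W β := by
      rintro ⟨β, hβ⟩
      obtain ⟨x, hx, hxW⟩ := not_subset.1 fun h => hmin β hβ (h.antisymm (hsub _))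
      obtain ⟨O, hO, hxO, hO'⟩ := hb.exists_subset_of_mem_open hx (hopen _ (hWopen β))
      exact ⟨⟨O, hO⟩, hO', fun h => hxW (h hxO)⟩
    choose O hO hO' using key
    have hinj : Injective O := by
      refine Injective.of_lt_imp_ne fun β γ hβγ h => hO' γ ?_
      rw [← h]
      exact (hO β).trans (hnextW hβγ)
    have := hbc.to_subtype
    exact hinj.countable
  · rintro ⟨β, hβ⟩
    rcases (mem_Iic.1 hβ).eq_or_lt with rfl | hβ
    · convert isOpen_univ
      exact eq_univ_of_forall hBα
    · convert hopen _ (hWopen β)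
      ext x
      exact hle hβ
  · rintro ⟨β, hβ⟩ hne
    have hβ : β < α := hβ.lt_of_ne fun h => hne (Subtype.ext h)
    simp only [hfib β hβ]
    exact hP _ (hmin β hβ)
  · simp only [hfibα]
    exact (hWopen α).isClosed_compl
  · simp only [hfibα]
    exact hfinal _ hα

end Derivation


/-! ### Absorption of summands -/

namespace WeaklyHomeomorphic

section Absorption

variable {T A : Type*} [TopologicalSpace T] [TopologicalSpace A]

theorem sigma_equiv_prod {J : Type*} [TopologicalSpace J] [DiscreteTopology J] :
    (Σ _ : J, T) ≋ (J × T) :=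
  of_continuous (fun x => (x.1, x.2)) (fun p => ⟨p.1, p.2⟩) (fun _ => rfl) (fun _ => rfl)
    (continuous_sigma fun j => by fun_prop)
    (continuous_prod_of_discrete_left.2 fun j =>
      (continuous_sigmaMk (σ := fun _ : J => T) (i := j)))

/-- The property of being weakly homeomorphic to the sum of countably many copies of itself. -/
def _root_.IsSelfSum (T : Type*) [TopologicalSpace T] : Prop := (Σ _ : ℕ, T) ≋ T

theorem _root_.IsSelfSum.sigma (hT : IsSelfSum T) {J : Type*} [Countable J] [Nonempty J] :
    (Σ _ : J, T) ≋ T := by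
  obtain ⟨e⟩ : Nonempty (J × ℕ ≃ ℕ) := nonempty_equiv_of_countable
  exact ((WeaklyHomeomorphic.sigma fun _ => hT.symm).trans sigma_prod).trans
    ((sigma_reindex e).trans hT)

/-- A sum of countably many copies of `A` is absorbed by a sum of countably many copies of `T`, as
soon as `T` has a closed copy of `A`: each copy of `T` can be cut along the closed copy of `A`. -/
theorem _root_.IsSelfSum.absorb (hT : IsSelfSum T) {f : A → T} (hf : IsClosedEmbedding f)
    {J : Type*} [Countable J] : ((Σ _ : J, A) ⊕ T) ≋ T := by
  obtain ⟨e⟩ : Nonempty (J ⊕ ℕ ≃ ℕ) := nonempty_equiv_of_countable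
  have h1 : T ≋ (A ⊕ ((range f)ᶜ : Set T)) :=
    (closed_sum hf.isClosed_range).trans
      ((of_homeomorph hf.isEmbedding.toHomeomorph.symm).sum rfl')
  have h2 : T ≋ ((Σ _ : ℕ, A) ⊕ (Σ _ : ℕ, ((range f)ᶜ : Set T))) :=
    (symm hT).trans ((WeaklyHomeomorphic.sigma fun _ => h1).trans sigma_sum)
  have h3 : ((Σ _ : J, A) ⊕ (Σ _ : ℕ, A)) ≋ (Σ _ : ℕ, A) :=
    sigma_add.symm.trans (sigma_reindex e)
  exact (rfl'.sum h2).trans (sum_assoc'.symm.trans ((h3.sum rfl').trans h2.symm))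

end Absorption

theorem _root_.homeomorph_nat_prod_rat : Nonempty (ℕ × ℚ ≃ₜ ℚ) := by
  have : PerfectSpace (ℕ × ℚ) := by
    refine ⟨preperfect_iff_nhds.2 ?_⟩
    rintro ⟨n, q⟩ - U hU
    have hcont : Continuous fun p : ℚ => (n, p) := by fun_prop
    obtain ⟨p, ⟨hp, -⟩, hpq⟩ := preperfect_iff_nhds.1 (PerfectSpace.univ_preperfect (α := ℚ)) q
      (mem_univ q) _ (hcont.continuousAt.preimage_mem_nhds hU)
    exact ⟨(n, p), ⟨hp, mem_univ _⟩, fun h => hpq (congrArg Prod.snd h)⟩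
  exact homeomorph_rat

theorem _root_.isSelfSum_rat : IsSelfSum ℚ := by
  obtain ⟨e⟩ := homeomorph_nat_prod_rat
  exact sigma_equiv_prod.trans (of_homeomorph e)

theorem _root_.isSelfSum_rat_prod_cantor : IsSelfSum (ℚ × (ℕ → Bool)) := by
  obtain ⟨e⟩ := homeomorph_nat_prod_rat
  exact sigma_equiv_prod.trans
    (of_homeomorph ((Homeomorph.prodAssoc ℕ ℚ (ℕ → Bool)).symm.trans
      (e.prodCongr (Homeomorph.refl _))))

/-- Cutting `2^ω` according to the position of the first `true`. -/
theorem cantor_decomposition :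
    (ℕ → Bool) ≋ (((Σ _ : Unit, Unit)) ⊕ (Σ _ : ℕ, (ℕ → Bool))) := by
  classical
  let z : ℕ → Bool := fun _ => false
  have hex : ∀ c : ({z}ᶜ : Set (ℕ → Bool)), ∃ i, c.1 i = true := by
    rintro ⟨c, hc⟩
    by_contra! h
    exact hc (funext fun i => by simpa using h i)
  let ρ : ({z}ᶜ : Set (ℕ → Bool)) → ℕ := fun c => Nat.find (hex c)
  have hρ : ∀ j, IsOpen {c | ρ c ≤ j} := by
    intro j
    have : {c | ρ c ≤ j} = ⋃ i, ⋃ (_ : i ≤ j), {c | c.1 i = true} := by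
      ext c
      simp [ρ, Nat.find_le_iff]
    rw [this]
    refine isOpen_iUnion fun i => isOpen_iUnion fun _ => ?_
    have hi : Continuous fun c : ({z}ᶜ : Set (ℕ → Bool)) => c.1 i :=
      (continuous_apply i).comp continuous_subtype_val
    exact (isOpen_discrete {true}).preimage hi
  have hfib : ∀ n, (ρ ⁻¹' {n} : Set _) ≋ (ℕ → Bool) := by
    intro n
    let g : (ℕ → Bool) → ℕ → Bool := fun d i =>
      if i < n then false else if i = n then true else d (i - (n + 1))
    have hgc : Continuous g := by
      refine continuous_pi fun i => ?_
      simp only [g]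
      split_ifs <;> fun_prop
    have hgn : ∀ d, g d n = true := fun d => by simp [g]
    have hgz : ∀ d, g d ∈ ({z}ᶜ : Set (ℕ → Bool)) := fun d h =>
      Bool.noConfusion ((hgn d).symm.trans (congrFun h n))
    have hgρ : ∀ d, ρ ⟨g d, hgz d⟩ = n := fun d =>
      (Nat.find_eq_iff _).2 ⟨hgn d, fun i hi => by simp [g, hi]⟩
    refine of_continuous (fun c i => c.1.1 (i + (n + 1))) (fun d => ⟨⟨g d, hgz d⟩, hgρ d⟩)
      ?_ ?_ ?_ ?_
    · rintro ⟨⟨c, hc⟩, hcn⟩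
      obtain ⟨h1, h2⟩ := (Nat.find_eq_iff _).1 (show Nat.find (hex ⟨c, hc⟩) = n from hcn)
      refine Subtype.ext (Subtype.ext (funext fun i => ?_))
      rcases lt_trichotomy i n with h | rfl | h
      · have h3 : c i = false := by simpa using h2 i h
        simp [g, h, h3]
      · simpa [g] using h1.symm
      · simp only [g, h.not_gt, h.ne', if_false]
        rw [Nat.sub_add_cancel h]
    · intro d
      funext i
      have h1 : ¬ i + (n + 1) < n := by omega
      have h2 : ¬ i + (n + 1) = n := by omega
      simp only [g, h1, h2, if_false]
      rw [Nat.add_sub_cancel]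
    · exact continuous_pi fun i => (continuous_apply _).comp
        (continuous_subtype_val.comp continuous_subtype_val)
    · exact (hgc.subtype_mk _).subtype_mk _
  have hz : (({z} : Set (ℕ → Bool)) : Type) ≋ (Σ _ : Unit, Unit) :=
    of_continuous (fun _ => ⟨(), ()⟩) (fun _ => ⟨z, rfl⟩) (fun c => Subtype.ext c.2.symm)
      (fun _ => rfl) continuous_const continuous_const
  exact (closed_sum isClosed_singleton).trans
    (hz.sum ((sigma_fibers ρ hρ).trans (sigma hfib)))

/-- By `cantor_decomposition`, `2^ω` is a point plus the sum of countably many copies of `2^ω`; the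
extra point is absorbed by the countably many points contained in that sum. -/
theorem _root_.isSelfSum_cantor : IsSelfSum (ℕ → Bool) := by
  obtain ⟨e⟩ : Nonempty (ℕ × ℕ ≃ ℕ) := nonempty_equiv_of_countable
  obtain ⟨e'⟩ : Nonempty (Unit ⊕ (ℕ × Unit) ≃ ℕ × Unit) := nonempty_equiv_of_countable
  have h1 : (Σ _ : ℕ, (ℕ → Bool)) ≋ ((Σ _ : ℕ × Unit, Unit) ⊕ (Σ _ : ℕ, (ℕ → Bool))) :=
    (sigma fun _ => cantor_decomposition).trans
      (sigma_sum.trans (sigma_prod.sum (sigma_prod.trans (sigma_reindex e))))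
  have h2 : ((Σ _ : Unit, Unit) ⊕ (Σ _ : ℕ × Unit, Unit)) ≋ (Σ _ : ℕ × Unit, Unit) :=
    sigma_add.symm.trans (sigma_reindex e')
  exact symm (cantor_decomposition.trans ((rfl'.sum h1).trans
    (sum_assoc'.symm.trans ((h2.sum rfl').trans h1.symm))))

end WeaklyHomeomorphic

/-! ### The classification -/

section Classification

open TopologicalSpace WeaklyHomeomorphic

/-- The three types of pieces removed from a space. -/
def IsBuildingBlock (F : Type*) [TopologicalSpace F] : Prop :=
  (F ≋ Unit) ∨ (F ≋ ℚ) ∨ (F ≋ (ℕ → Bool))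

/-- A nonempty closed set none of whose relatively open subsets is a building block is a copy of
`ℚ × 2^ω`. -/
theorem homeomorph_kernel {X : Type*} [TopologicalSpace X] [MetrizableSpace X] [SigmaCompactSpace X]
    (h : ZeroDim X) {Q : Set X} (hQ : IsClosed Q) (hne : Q.Nonempty)
    (hker : ∀ V, IsOpen V → (V ∩ Q).Nonempty → ¬ IsBuildingBlock (V ∩ Q : Set X)) :
    Nonempty (Q ≃ₜ ℚ × (ℕ → Bool)) := by
  have hperf : Preperfect Q := by
    refine preperfect_iff_nhds.2 fun x hx U hU => ?_
    by_contra! hcon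
    have hxU : x ∈ interior U := mem_interior_iff_mem_nhds.2 hU
    refine hker (interior U) isOpen_interior ⟨x, hxU, hx⟩ (Or.inl ?_)
    refine of_continuous (fun _ => ()) (fun _ => ⟨x, hxU, hx⟩) (fun y => Subtype.ext ?_)
      (fun _ => rfl) continuous_const continuous_const
    exact (hcon y ⟨interior_subset y.2.1, y.2.2⟩).symm
  have := hne.to_subtype
  have := hQ.isClosedEmbedding_subtypeVal.sigmaCompactSpace
  have hV : ∀ U : Set Q, IsClopen U → ∃ V, IsOpen V ∧ V ∩ Q = Subtype.val '' U := by
    intro U hU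
    obtain ⟨V, hV, rfl⟩ := isOpen_induced_iff.1 hU.isOpen
    exact ⟨V, hV, by rw [Subtype.image_preimage_coe, inter_comm]⟩
  refine homeomorph_rat_prod_cantor (h.subtype Q) (fun U hU hUne hc => ?_)
    fun U hU hUne hc => ?_
  · obtain ⟨V, hVo, hVU⟩ := hV U hU
    have hVne : (V ∩ Q).Nonempty := hVU ▸ hUne.image _
    have hVc : (V ∩ Q).Countable := hVU ▸ hc.image _
    have := hVc.to_subtype
    have := hVne.to_subtype
    have := (hperf.open_inter hVo).perfectSpace_coe
    obtain ⟨e⟩ := homeomorph_rat (X := (V ∩ Q : Set X))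
    exact hker V hVo hVne (Or.inr (Or.inl (of_homeomorph e)))
  · obtain ⟨V, hVo, hVU⟩ := hV U hU
    have hVne : (V ∩ Q).Nonempty := hVU ▸ hUne.image _
    have hVc : IsCompact (V ∩ Q) := hVU ▸ hc.image continuous_subtype_val
    obtain ⟨e⟩ := h.homeomorph_cantor_of_preperfect hVc (hperf.open_inter hVo) hVne
    exact hker V hVo hVne (Or.inr (Or.inr (of_homeomorph e)))

theorem exists_sorted_sum.{u, v} {J : Type u} [Countable J] (F : J → Type v)
    [∀ j, TopologicalSpace (F j)] (hF : ∀ j, IsBuildingBlock (F j)) :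
    ∃ (I₁ I₂ I₃ : Type u) (_ : Countable I₁) (_ : Countable I₂) (_ : Countable I₃),
      (Σ j, F j) ≋ ((Σ _ : I₁, Unit) ⊕ ((Σ _ : I₂, ℚ) ⊕ (Σ _ : I₃, (ℕ → Bool)))) := by
  refine ⟨{j // F j ≋ Unit}, {j : {j // ¬ (F j ≋ Unit)} // F j ≋ ℚ},
    {j : {j // ¬ (F j ≋ Unit)} // ¬ (F j ≋ ℚ)}, inferInstance, inferInstance, inferInstance, ?_⟩
  refine (sigma_split (fun j => F j ≋ Unit) F).trans (sum (sigma fun j => j.2) ?_)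
  refine (sigma_split (fun j : {j // ¬ (F j ≋ Unit)} => F j ≋ ℚ) fun j => F j).trans
    (sum (sigma fun j => j.2) (sigma fun j => ?_))
  exact ((hF j.1).resolve_left j.1.2).resolve_left j.2

/-- Up to weak homeomorphism, the space is a sum of countably many points, copies of `ℚ` and copies
of `2^ω`, together with a kernel which is empty or a copy of `ℚ × 2^ω`. -/
theorem exists_sum_decomposition.{u} {X : Type u} [TopologicalSpace X] [MetrizableSpace X]
    [SigmaCompactSpace X] (h : ZeroDim X) :
    ∃ (I₁ I₂ I₃ : Type (u + 1)) (_ : Countable I₁) (_ : Countable I₂) (_ : Countable I₃)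
      (Q : Set X), (Q.Nonempty → Nonempty (Q ≃ₜ ℚ × (ℕ → Bool))) ∧
      (X ≋ (((Σ _ : I₁, Unit) ⊕ ((Σ _ : I₂, ℚ) ⊕ (Σ _ : I₃, (ℕ → Bool)))) ⊕ Q)) := by
  let := metrizableSpaceMetric X
  obtain ⟨J, _, F, j₀, hX, hF, hcl, hker⟩ :=
    exists_decomposition fun F : Set X => IsBuildingBlock F
  obtain ⟨I₁, I₂, I₃, h₁, h₂, h₃, hI⟩ :=
    exists_sorted_sum (fun j : {j // ¬ j = j₀} => F j) fun j => hF j j.2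
  refine ⟨I₁, I₂, I₃, h₁, h₂, h₃, F j₀, fun hne => homeomorph_kernel h hcl hne hker, ?_⟩
  have hmem : ∀ x : Σ j : {j // j = j₀}, F j, (x.2 : X) ∈ F j₀ := by
    rintro ⟨⟨j, rfl⟩, x⟩
    exact x.2
  have hone : (Σ j : {j // j = j₀}, F j) ≋ F j₀ := by
    refine of_continuous (fun x => ⟨x.2, hmem x⟩)
      (fun x => ⟨⟨j₀, rfl⟩, x⟩) ?_ (fun _ => rfl)
      ((continuous_sigma fun j => continuous_subtype_val).subtype_mk _)
      (continuous_sigmaMk (σ := fun j : {j // j = j₀} => F j) (i := ⟨j₀, rfl⟩))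
    rintro ⟨⟨j, rfl⟩, x⟩
    rfl
  exact hX.trans ((sigma_split (fun j => j = j₀) fun j => F j).trans
    ((sum hone hI).trans sum_comm'))

end Classification

theorem classification_zeroDim_sigmaCompact
    {X : Type*} [TopologicalSpace X] [Infinite X]
    [TopologicalSpace.MetrizableSpace X] [SigmaCompactSpace X]
    (hzd : TopologicalSpace.IsTopologicalBasis {s : Set X | IsClopen s}) :
    WeaklyHomeomorphic X ℕ ∨ WeaklyHomeomorphic X (ℕ → Bool) ∨
      WeaklyHomeomorphic X ℚ ∨ WeaklyHomeomorphic X (ℚ ⊕ (ℕ → Bool)) ∨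
      WeaklyHomeomorphic X (ℚ × (ℕ → Bool)) := by
  obtain ⟨I₁, I₂, I₃, _, _, _, Q, hQ, hX⟩ := exists_sum_decomposition (X := X) hzd
  have hpoint : ∀ {T : Type} [TopologicalSpace T] [T1Space T] (t : T),
      IsClosedEmbedding fun _ : Unit => t := fun t =>
    .of_continuous_injective_isClosedMap continuous_const (fun _ _ _ => rfl) fun s _ =>
      (Set.toFinite _).isClosed
  -- If the kernel is nonempty, it absorbs all other summands; otherwise the case depends on whether
  -- copies of `ℚ` and of `2^ω` occur.
  rcases Q.eq_empty_or_nonempty with rfl | hne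
  · have hX' := hX.trans .sum_empty
    rcases isEmpty_or_nonempty I₂ with _ | _ <;> rcases isEmpty_or_nonempty I₃ with _ | _
    · left
      have hX₁ := (hX'.trans (.sum .rfl' .sum_empty)).trans .sum_empty
      obtain ⟨f, g, hgf, -⟩ := hX₁
      have : Infinite I₁ := by
        have hinf := Infinite.of_injective f hgf.injective
        exact Infinite.of_injective (fun x : Σ _ : I₁, Unit => x.1) fun x y hxy =>
          Sigma.ext hxy HEq.rfl
      obtain ⟨e⟩ : Nonempty (I₁ ≃ ℕ) := nonempty_equiv_of_countable
      refine (((hX'.trans (.sum .rfl' .sum_empty)).trans .sum_empty).trans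
        (.sigma_reindex e)).trans (.of_continuous (fun x => x.1) (fun n => ⟨n, ()⟩)
          (fun _ => rfl) (fun _ => rfl) ?_ continuous_of_discreteTopology)
      exact continuous_sigma fun _ => continuous_const
    · right; left
      exact hX'.trans ((WeaklyHomeomorphic.sum .rfl'
        (WeaklyHomeomorphic.empty_sum.trans isSelfSum_cantor.sigma)).trans
        (isSelfSum_cantor.absorb (hpoint fun _ => false)))
    · right; right; left
      exact hX'.trans ((WeaklyHomeomorphic.sum .rfl'
        (WeaklyHomeomorphic.sum_empty.trans isSelfSum_rat.sigma)).trans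
        (isSelfSum_rat.absorb (hpoint 0)))
    · right; right; right; left
      exact hX'.trans ((WeaklyHomeomorphic.sum .rfl'
        (isSelfSum_rat.sigma.sum isSelfSum_cantor.sigma)).trans
        (WeaklyHomeomorphic.sum_assoc'.symm.trans
          ((isSelfSum_rat.absorb (hpoint 0)).sum .rfl')))
  · right; right; right; right
    obtain ⟨e⟩ := hQ hne
    have hrat : IsClosedEmbedding fun q : ℚ => (q, fun _ : ℕ => false) :=
      .of_continuous_injective_isClosedMap (by fun_prop) (Prod.mk_left_injective _) fun s hs => by
        have := hs.prod (isClosed_singleton (x := fun _ : ℕ => false))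
        rwa [Set.prod_singleton] at this
    have hcan : IsClosedEmbedding fun c : ℕ → Bool => ((0 : ℚ), c) :=
      (by fun_prop : Continuous fun c : ℕ → Bool => ((0 : ℚ), c)).isClosedEmbedding
        (Prod.mk_right_injective _)
    have hT := isSelfSum_rat_prod_cantor
    refine hX.trans ((WeaklyHomeomorphic.sum .rfl' (.of_homeomorph e)).trans
      (WeaklyHomeomorphic.sum_assoc'.trans ((WeaklyHomeomorphic.sum .rfl' ?_).trans
        (hT.absorb (hpoint (0, fun _ => false))))))
    exact WeaklyHomeomorphic.sum_assoc'.trans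
      ((WeaklyHomeomorphic.sum .rfl' (hT.absorb hcan)).trans (hT.absorb hrat))
end
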